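/- A pair (A,B) ∈ SL(2,ℝ)² is uniformly hyperbolic with respect to the full shift on two symbols if and only if either (A,B) ∈ H₀, or there exists a finite sequence (ε₁,…,ε_k) ∈ {+,−}^k (k ≥ 0) such that F_{ε_k}∘⋯∘F_{ε₁}(A,B) ∈ H_id. Moreover these two alternatives are mutually exclusive, and in the second alternative the sequence (ε₁,…,ε_k) is unique. -/

import Mathlib

/-!
All dynamics of `F₊` and `F₋` is seen on the triple `(x, y, z) = (tr A, tr B, tr AB)`, on which
they act by `(x, y, z) ↦ (x, z, xz - y)` and `(x, y, z) ↦ (z, y, yz - x)`; the quantity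
`x² + y² + z² - xyz - 2`, the trace of the commutator, is invariant.

*Uniqueness.* One step sends `HidTr` (the condition `H_id` on triples) into the invariant set
`ParTr`, which is disjoint from it; and if both generators eventually led to `HidTr`, the
inequalities of `LinkTr_of_step_true` would give `|z| < 2` (`seqT_unique`).

*Uniform hyperbolicity implies one of the alternatives.* All products of a uniformly hyperbolic
pair are hyperbolic matrices, with traces growing exponentially in the length (`le_trace`,
`two_lt_trace`). If `xyz < 0` the pair is in `H_id`. Otherwise either the axes of `A` and `B` are
in a position which allows one to write down a common invariant cone (`posPair_of_not_weakLink`),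
and the interior of this cone is an interval showing that the pair is in `H₀` (`H0_of_posPair`);
or the triple is in `WeakLinkTr`. In that last case a suitable generator does not increase the
bounded quantity `potT` and remains in `WeakLinkTr` as long as `H_id` is not reached. Since the
words involved get longer, their traces would have to grow, so `H_id` is reached
(`exists_Hid_of_weakLink`).

*Converse.* An open interval in `ℙ¹` is an open cone (`interval_structure`), so a pair in `H₀` has
positive entries in some basis, up to signs (`posPair_of_H0`), and then the product of the
coordinates of a vector in the cone grows exponentially (`unifHyp_of_posPair`). For a pair in
`H_id` the growth holds for all reduced words of the free group (`freeGrowth_of_Hid`), a property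
which can be pulled back through `F₊` and `F₋` since these come from automorphisms of the free
group. To prove it, put `S = AB - BA`. The three trace-zero matrices `±AS`, `S`, `±SB`
anticommute up to scalars, hence act by conjugation on their span as minus reflections, whose Gram
matrix has diagonal `-2` and off-diagonal entries `|x|, |y|, |z| > 2`; up to scalars `A` and `B`
are products of two of them. A reduced word in the reflections, applied to `(1, 1, 1)`, multiplies
the largest coordinate by a factor at least `min(|x|, |y|, |z|) - 1 > 1` at each step.

*Exclusivity.* `H₀` is preserved by `F₊` and `F₋` (`H0_invariant`), while a pair preserving a cone
has a positive product of traces (`not_Hid_of_posPair`).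
-/

open Matrix

noncomputable section

/-- `SL(2,ℝ)`. -/
abbrev SL2 := Matrix.SpecialLinearGroup (Fin 2) ℝ

/-- Operator norm of a `2 × 2` real matrix, induced by the Euclidean norm on `ℝ²`. -/
noncomputable def opNorm (A : Matrix (Fin 2) (Fin 2) ℝ) : ℝ :=
  ‖Matrix.toEuclideanCLM (𝕜 := ℝ) A‖

/-- Trace of an element of `SL(2,ℝ)`. -/
def trace2 (A : SL2) : ℝ := Matrix.trace (A : Matrix (Fin 2) (Fin 2) ℝ)

/-- Topology on `SL(2,ℝ)` induced from the space of `2 × 2` real matrices. -/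
instance : TopologicalSpace SL2 := instTopologicalSpaceSubtype

/-- The real projective line: quotient of `ℝ² ∖ {0}` by nonzero scalar multiplication. -/
abbrev P1 := Projectivization ℝ (Fin 2 → ℝ)

/-- The quotient topology on the real projective line. -/
instance : TopologicalSpace P1 := instTopologicalSpaceQuotient

/-- The projective action of `SL(2,ℝ)` on the real projective line. -/
def projAct (A : SL2) : P1 → P1 :=
  Projectivization.map (Matrix.SpecialLinearGroup.toLin' A).toLinearMap
    (Matrix.SpecialLinearGroup.toLin' A).injective

/-- For a word `w = [i₁, …, iₙ]`, the product `A_{iₙ} ⋯ A_{i₁}`. -/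
def wordProd {N : ℕ} (A : Fin N → SL2) (w : List (Fin N)) : SL2 :=
  (w.reverse.map A).prod

/-- Uniform hyperbolicity with respect to the full shift on `N` symbols:
every product of `n` matrices has operator norm at least `C·λⁿ`. -/
def UnifHyp {N : ℕ} (A : Fin N → SL2) : Prop :=
  ∃ C > (0:ℝ), ∃ lam > (1:ℝ), ∀ w : List (Fin N), w ≠ [] →
    opNorm (wordProd A w : Matrix (Fin 2) (Fin 2) ℝ) ≥ C * lam ^ w.length

/-- Transitivity of the subshift of finite type given by the transition relation `T`:
any symbol can be joined to any other by an admissible word. -/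
def TransitiveSubshift {N : ℕ} (T : Fin N → Fin N → Prop) : Prop :=
  ∀ α β : Fin N, ∃ w : List (Fin N), w ≠ [] ∧ w.Chain' T ∧
    w.head? = some α ∧ w.getLast? = some β

/-- Uniform hyperbolicity with respect to the subshift determined by the
transition relation `T`. -/
def UnifHypSub {N : ℕ} (T : Fin N → Fin N → Prop) (A : Fin N → SL2) : Prop :=
  ∃ C > (0:ℝ), ∃ lam > (1:ℝ), ∀ w : List (Fin N), w ≠ [] → w.Chain' T →
    opNorm (wordProd A w : Matrix (Fin 2) (Fin 2) ℝ) ≥ C * lam ^ w.length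

/-- For a word `w` in two letters (`true ↦ A`, `false ↦ B`), the corresponding
product of the matrices `A`, `B` (letters applied right-to-left). -/
def pairProd (A B : SL2) (w : List Bool) : SL2 :=
  (w.reverse.map fun b => if b then A else B).prod

/-- Uniform hyperbolicity of a pair `(A,B)` with respect to the full shift on two symbols. -/
def UnifHypPair (A B : SL2) : Prop :=
  ∃ C > (0:ℝ), ∃ lam > (1:ℝ), ∀ w : List Bool, w ≠ [] →
    opNorm (pairProd A B w : Matrix (Fin 2) (Fin 2) ℝ) ≥ C * lam ^ w.length

/-- The hyperbolicity locus for the full shift on two symbols. -/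
def UHpairs : Set (SL2 × SL2) := {p | UnifHypPair p.1 p.2}

/-- The set of pairs having an elliptic product. -/
def Epairs : Set (SL2 × SL2) :=
  {p | ∃ w : List Bool, w ≠ [] ∧ |trace2 (pairProd p.1 p.2 w)| < 2}

/-- An open interval in the projective line: a nonempty open connected subset
whose complement contains more than one point. -/
def IsOpenInterval (I : Set P1) : Prop :=
  IsOpen I ∧ IsConnected I ∧ Iᶜ.Nontrivial

/-- `H₀`: pairs possessing a common strictly invariant open interval. -/
def H0 : Set (SL2 × SL2) :=
  {p | ∃ I : Set P1, IsOpenInterval I ∧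
        projAct p.1 '' closure I ⊆ I ∧ projAct p.2 '' closure I ⊆ I}

/-- `H_id`: pairs with `|tr A| > 2`, `|tr B| > 2`, `|tr AB| > 2`, `tr A · tr B · tr AB < 0`. -/
def Hid : Set (SL2 × SL2) :=
  {p | 2 < |trace2 p.1| ∧ 2 < |trace2 p.2| ∧ 2 < |trace2 (p.1 * p.2)| ∧
       trace2 p.1 * trace2 p.2 * trace2 (p.1 * p.2) < 0}

/-- `F₊(A,B) = (A, AB)`. -/
def Fplus (p : SL2 × SL2) : SL2 × SL2 := (p.1, p.1 * p.2)

/-- `F₋(A,B) = (BA, B)`. -/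
def Fminus (p : SL2 × SL2) : SL2 × SL2 := (p.2 * p.1, p.2)

/-- `applySeq [ε₁, …, ε_k] = F_{ε_k} ∘ ⋯ ∘ F_{ε₁}`, where `true` stands for `+`
and `false` for `−`. -/
def applySeq (s : List Bool) (p : SL2 × SL2) : SL2 × SL2 :=
  s.foldl (fun q e => if e then Fplus q else Fminus q) p

/-- A pair `(A,B)` is free if `|tr A| ≥ 2`, `|tr B| ≥ 2`, `|tr AB| ≥ 2` and
`tr A · tr B · tr AB < 0`. -/
def FreePair (p : SL2 × SL2) : Prop :=
  2 ≤ |trace2 p.1| ∧ 2 ≤ |trace2 p.2| ∧ 2 ≤ |trace2 (p.1 * p.2)| ∧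
    trace2 p.1 * trace2 p.2 * trace2 (p.1 * p.2) < 0

/-- A pair is straight if it lies in the closure of `H₀`. -/
def Straight (p : SL2 × SL2) : Prop := p ∈ closure H0

/-- A pair `(A,B)` is twisted if `|tr A| ≥ 2`, `|tr B| ≥ 2` and it is not straight. -/
def Twisted (p : SL2 × SL2) : Prop :=
  2 ≤ |trace2 p.1| ∧ 2 ≤ |trace2 p.2| ∧ ¬ Straight p

/-- A pair is almost hyperbolic if every image of it under the monoid generated by
`F₊`, `F₋` consists of two non-elliptic matrices. -/
def AlmostHyperbolic (p : SL2 × SL2) : Prop :=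
  ∀ s : List Bool, 2 ≤ |trace2 (applySeq s p).1| ∧ 2 ≤ |trace2 (applySeq s p).2|

/-- Group-hyperbolicity of a pair: exponential growth over all reduced words
in the free group on two generators (`true ↦ A`, `false ↦ B`). -/
def GroupHyp (A B : SL2) : Prop :=
  ∃ C > (0:ℝ), ∃ τ > (0:ℝ), ∀ g : FreeGroup Bool, g ≠ 1 →
    opNorm ((FreeGroup.lift (fun b => if b then A else B) g : SL2) :
        Matrix (Fin 2) (Fin 2) ℝ) ≥
      C * Real.exp (τ * (FreeGroup.toWord g).length)

/-- `M` has finitely many connected components, and distinct components have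
disjoint closures. -/
def FinCompDisjClosures (M : Set P1) : Prop :=
  {C : Set P1 | ∃ x ∈ M, C = connectedComponentIn M x}.Finite ∧
    ∀ x ∈ M, ∀ y ∈ M, connectedComponentIn M x ≠ connectedComponentIn M y →
      closure (connectedComponentIn M x) ∩ closure (connectedComponentIn M y) = ∅

end


/-! ### Trace coordinates and uniqueness -/

lemma trace2_eq (A : SL2) : trace2 A = A 0 0 + A 1 1 := by
  simp [trace2, Matrix.trace_fin_two]

lemma det_eq (A : SL2) : A 0 0 * A 1 1 - A 0 1 * A 1 0 = 1 := by
  have := A.det_coe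
  rwa [Matrix.det_fin_two] at this

lemma trace2_mul (A B : SL2) : trace2 (A * B) =
    A 0 0 * B 0 0 + A 0 1 * B 1 0 + (A 1 0 * B 0 1 + A 1 1 * B 1 1) := by
  simp [trace2, Matrix.trace_fin_two, Matrix.mul_apply, Fin.sum_univ_two]

lemma trace2_comm (A B : SL2) : trace2 (A * B) = trace2 (B * A) := by
  rw [trace2_mul, trace2_mul]; ring

lemma trace2_left (A B : SL2) :
    trace2 (A * (A * B)) = trace2 A * trace2 (A * B) - trace2 B := by
  have h := det_eq A
  rw [trace2_mul A (A * B), trace2_mul A B, trace2_eq, trace2_eq]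
  simp only [Matrix.SpecialLinearGroup.coe_mul, Matrix.mul_apply, Fin.sum_univ_two]
  linear_combination (-(B 0 0) - B 1 1) * h

lemma trace2_right (A B : SL2) :
    trace2 ((B * A) * B) = trace2 B * trace2 (A * B) - trace2 A := by
  rw [trace2_comm (B * A) B, trace2_left B A, trace2_comm B A]

/-- The action of the generators on trace triples. -/
def stepT (e : Bool) (v : ℝ × ℝ × ℝ) : ℝ × ℝ × ℝ :=
  if e then (v.1, v.2.2, v.1 * v.2.2 - v.2.1) else (v.2.2, v.2.1, v.2.1 * v.2.2 - v.1)

/-- The trace triple of a pair. -/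
def trT (p : SL2 × SL2) : ℝ × ℝ × ℝ := (trace2 p.1, trace2 p.2, trace2 (p.1 * p.2))

/-- `H_id` in trace coordinates. -/
def HidTr : Set (ℝ × ℝ × ℝ) :=
  {v | 2 < |v.1| ∧ 2 < |v.2.1| ∧ 2 < |v.2.2| ∧ v.1 * v.2.1 * v.2.2 < 0}

/-- The action of a sequence of generators on trace triples. -/
def seqT (s : List Bool) (v : ℝ × ℝ × ℝ) : ℝ × ℝ × ℝ := s.foldl (fun q e => stepT e q) v

lemma trT_step (e : Bool) (p : SL2 × SL2) :
    trT (if e then Fplus p else Fminus p) = stepT e (trT p) := by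
  obtain ⟨A, B⟩ := p
  cases e
  · simp [trT, stepT, Fminus, trace2_right, trace2_comm B A]
  · simp [trT, stepT, Fplus, trace2_left]

lemma trT_applySeq (s : List Bool) (p : SL2 × SL2) :
    trT (applySeq s p) = seqT s (trT p) := by
  induction s generalizing p with
  | nil => rfl
  | cons e s ih =>
    have : applySeq (e :: s) p = applySeq s (if e then Fplus p else Fminus p) := rfl
    rw [this, ih, trT_step]; rfl

lemma mem_Hid_iff (s : List Bool) (p : SL2 × SL2) :
    applySeq s p ∈ Hid ↔ seqT s (trT p) ∈ HidTr := by
  rw [← trT_applySeq]; rfl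

lemma abs_prod {x y z : ℝ} (h : 0 < x * y * z) : x * y * z = |x| * |y| * |z| := by
  rw [← abs_mul, ← abs_mul, abs_of_pos h]

/-- For a positive product `xyz` the numbers `xz` and `y` have the same sign, so the step of the
generators can be computed on absolute values. -/
lemma abs_third {x y z : ℝ} (h : 0 < x * y * z) : |x * z - y| = |(|x| * |z| - |y|)| := by
  have h1 := abs_prod h
  rw [← sq_eq_sq₀ (abs_nonneg _) (abs_nonneg _), sq_abs, sq_abs]
  have hx := sq_abs x; have hy := sq_abs y; have hz := sq_abs z
  calc (x * z - y) ^ 2 = x ^ 2 * z ^ 2 + y ^ 2 - 2 * (x * y * z) := by ring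
    _ = _ := by rw [h1, ← hx, ← hy, ← hz]; ring

lemma prod_third {x y z : ℝ} (h : 0 < x * y * z) :
    x * z * (x * z - y) = |x| * |z| * (|x| * |z| - |y|) := by
  have h1 := abs_prod h
  have hx := sq_abs x; have hz := sq_abs z
  calc x * z * (x * z - y) = x ^ 2 * z ^ 2 - x * y * z := by ring
    _ = _ := by rw [h1, ← hx, ← hz]; ring

/-- Hyperbolic triples with positive product of traces for which
`|tr A| |tr B| - |tr AB| ≤ |tr AB|`, that is `|tr A B⁻¹|` does not exceed `|tr AB|`. The set is
preserved by both generators, so such triples never reach `HidTr`. -/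
def ParTr : Set (ℝ × ℝ × ℝ) :=
  {v | 2 < |v.1| ∧ 2 < |v.2.1| ∧ 2 < |v.2.2| ∧ 0 < v.1 * v.2.1 * v.2.2 ∧
    |v.1| * |v.2.1| ≤ 2 * |v.2.2|}

/-- Exchange of the first two traces; it conjugates the action of `F₊` to that of `F₋`. -/
def swapT (v : ℝ × ℝ × ℝ) : ℝ × ℝ × ℝ := (v.2.1, v.1, v.2.2)

lemma stepT_false (v : ℝ × ℝ × ℝ) : stepT false v = swapT (stepT true (swapT v)) := by
  simp [stepT, swapT]

lemma swapT_ParTr (v : ℝ × ℝ × ℝ) : swapT v ∈ ParTr ↔ v ∈ ParTr := by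
  simp only [ParTr, swapT, Set.mem_ofPred_eq]
  rw [mul_comm v.2.1 v.1, mul_comm |v.2.1|]; tauto

lemma swapT_HidTr (v : ℝ × ℝ × ℝ) : swapT v ∈ HidTr ↔ v ∈ HidTr := by
  simp only [HidTr, swapT, Set.mem_ofPred_eq]
  rw [mul_comm v.2.1 v.1]; tauto

lemma ParTr_step_true {v : ℝ × ℝ × ℝ} (h : v ∈ ParTr) : stepT true v ∈ ParTr := by
  obtain ⟨x, y, z⟩ := v
  obtain ⟨hx, hy, hz, h0, h1⟩ := h
  simp only [ParTr, stepT, Set.mem_ofPred_eq, if_true] at *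
  rw [abs_third h0, prod_third h0]
  generalize |x| = X at *
  generalize |y| = Y at *
  generalize |z| = Z at *
  have h2 : 2 * Y ≤ X * Z := by nlinarith [mul_pos (sub_pos.2 hx) (sub_pos.2 hy)]
  have h3 : 4 < X * Z := by nlinarith
  rw [abs_of_pos (by linarith)]
  refine ⟨hx, hz, by linarith, mul_pos (by linarith) (by linarith), by linarith⟩

lemma ParTr_step (e : Bool) {v : ℝ × ℝ × ℝ} (h : v ∈ ParTr) : stepT e v ∈ ParTr := by
  cases e
  · rw [stepT_false, swapT_ParTr]; exact ParTr_step_true ((swapT_ParTr v).2 h)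
  · exact ParTr_step_true h

lemma ParTr_seq (s : List Bool) {v : ℝ × ℝ × ℝ} (h : v ∈ ParTr) : seqT s v ∈ ParTr := by
  induction s generalizing v with
  | nil => exact h
  | cons e s ih => exact ih (ParTr_step e h)

lemma ParTr_not_HidTr {v : ℝ × ℝ × ℝ} (h : v ∈ ParTr) : v ∉ HidTr := fun h' =>
  absurd h.2.2.2.1 (not_lt.2 h'.2.2.2.le)

lemma HidTr_step_true {v : ℝ × ℝ × ℝ} (h : v ∈ HidTr) : stepT true v ∈ ParTr := by
  obtain ⟨x, y, z⟩ := v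
  obtain ⟨hx, hy, hz, h0⟩ := h
  simp only [ParTr, stepT, Set.mem_ofPred_eq, if_true] at *
  have h0' : 0 < x * (-y) * z := by linarith
  have e1 := abs_third h0'
  have e2 := abs_prod h0'
  simp only [sub_neg_eq_add, abs_neg] at e1 e2
  have e3 : |x * z - y| = |x| * |z| + |y| := by
    rw [← sq_eq_sq₀ (abs_nonneg _) (by positivity), sq_abs]
    have hx := sq_abs x; have hy := sq_abs y; have hz := sq_abs z
    calc (x * z - y) ^ 2 = x ^ 2 * z ^ 2 + y ^ 2 + 2 * (x * -y * z) := by ring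
      _ = _ := by rw [e2, ← hx, ← hy, ← hz]; ring
  rw [e3]
  refine ⟨hx, hz, by nlinarith, ?_, by nlinarith⟩
  have : x * z * (x * z - y) = (x * z) ^ 2 + (x * -y * z) := by ring
  rw [this]; positivity

lemma HidTr_step (e : Bool) {v : ℝ × ℝ × ℝ} (h : v ∈ HidTr) : stepT e v ∈ ParTr := by
  cases e
  · rw [stepT_false, swapT_ParTr]; exact HidTr_step_true ((swapT_HidTr v).2 h)
  · exact HidTr_step_true h

/-- One step takes `HidTr` into the invariant set `ParTr`, so a triple never returns to `HidTr`. -/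
lemma HidTr_nil {v : ℝ × ℝ × ℝ} (h : v ∈ HidTr) {s : List Bool} (hs : seqT s v ∈ HidTr) : s = [] := by
  cases s with
  | nil => rfl
  | cons e s => exact absurd hs (ParTr_not_HidTr (ParTr_seq s (HidTr_step e h)))

/-- Hyperbolic triples with positive product of traces for which `|tr AB|` is smaller than
`|tr A B⁻¹|`. Triples from which `HidTr` is reached after at least one step belong to this set. -/
def LinkTr : Set (ℝ × ℝ × ℝ) :=
  {v | 2 < |v.1| ∧ 2 < |v.2.1| ∧ 2 < |v.2.2| ∧ 0 < v.1 * v.2.1 * v.2.2 ∧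
    2 * |v.2.2| < |v.1| * |v.2.1|}

lemma swapT_LinkTr (v : ℝ × ℝ × ℝ) : swapT v ∈ LinkTr ↔ v ∈ LinkTr := by
  simp only [LinkTr, swapT, Set.mem_ofPred_eq]
  rw [mul_comm v.2.1 v.1, mul_comm |v.2.1|]; tauto

/-- Going backwards along the trajectory: the predecessor of a triple of `HidTr` or `LinkTr` lies
in `LinkTr`, and its dominant entry tells which generator was used. -/
lemma LinkTr_of_step_true {v : ℝ × ℝ × ℝ} (h : stepT true v ∈ HidTr ∨ stepT true v ∈ LinkTr) :
    v ∈ LinkTr ∧ |v.1| * |v.2.2| < 2 * |v.2.1| := by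
  obtain ⟨x, y, z⟩ := v
  have key : 2 < |x| ∧ 2 < |z| ∧ 0 < x * y * z ∧ |x| * |z| < 2 * |y| := by
    rcases h with ⟨hx, hz, hw, h0⟩ | ⟨hx, hz, hw, h0, h1⟩
    · simp only [stepT, if_true] at *
      have hp : 0 < x * y * z := by nlinarith [sq_nonneg (x * z)]
      refine ⟨hx, hz, hp, ?_⟩
      rw [prod_third hp] at h0
      have := mul_pos (by linarith : 0 < |x|) (by linarith : 0 < |z|)
      nlinarith
    · simp only [stepT, if_true] at *
      have hxz : 4 < |x| * |z| := by nlinarith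
      have hsq : (x * z) ^ 2 = (|x| * |z|) ^ 2 := by rw [← abs_mul, sq_abs]
      have hp : 0 < x * y * z := by
        have h2 : |x * z * (x * z - y)| = |x| * |z| * |x * z - y| := by
          rw [abs_mul, abs_mul]
        rw [abs_of_pos h0] at h2
        nlinarith
      refine ⟨hx, hz, hp, ?_⟩
      rw [abs_third hp] at h1
      have := (abs_lt.1 (by linarith : |(|x| * |z| - |y|)| < |x| * |z| / 2)).2
      linarith
  obtain ⟨hx, hz, hp, h1⟩ := key
  refine ⟨⟨hx, ?_, hz, hp, ?_⟩, h1⟩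
  · show 2 < |y|
    nlinarith
  · show 2 * |z| < |x| * |y|
    have h2 : |x| * (|x| * |z|) < |x| * (2 * |y|) := mul_lt_mul_of_pos_left h1 (by linarith)
    have h3 : 2 * |z| < |x| * |z| := mul_lt_mul_of_pos_right hx (by linarith)
    nlinarith

lemma LinkTr_of_step_false {v : ℝ × ℝ × ℝ} (h : stepT false v ∈ HidTr ∨ stepT false v ∈ LinkTr) :
    v ∈ LinkTr ∧ |v.2.1| * |v.2.2| < 2 * |v.1| := by
  rw [stepT_false, swapT_HidTr, swapT_LinkTr] at h
  have := LinkTr_of_step_true h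
  rwa [swapT_LinkTr] at this

lemma HidTr_or_LinkTr {v : ℝ × ℝ × ℝ} (s : List Bool) (h : seqT s v ∈ HidTr) : v ∈ HidTr ∨ v ∈ LinkTr := by
  induction s generalizing v with
  | nil => exact Or.inl h
  | cons e s ih =>
    have := ih (v := stepT e v) h
    cases e
    · exact Or.inr (LinkTr_of_step_false this).1
    · exact Or.inr (LinkTr_of_step_true this).1

/-- The two generators cannot both lead to `HidTr`: this would give `|x| |z| < 2 |y|` and
`|y| |z| < 2 |x|`, hence `|z| < 2`. -/
lemma not_both {v : ℝ × ℝ × ℝ} (s t : List Bool) (hs : seqT s (stepT true v) ∈ HidTr)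
    (ht : seqT t (stepT false v) ∈ HidTr) : False := by
  obtain ⟨⟨hx, hy, hz, -, -⟩, h1⟩ := LinkTr_of_step_true (HidTr_or_LinkTr s hs)
  obtain ⟨-, h2⟩ := LinkTr_of_step_false (HidTr_or_LinkTr t ht)
  nlinarith

theorem seqT_unique {v : ℝ × ℝ × ℝ} (s t : List Bool) (hs : seqT s v ∈ HidTr)
    (ht : seqT t v ∈ HidTr) : s = t := by
  induction s generalizing v t with
  | nil => exact (HidTr_nil hs ht).symm
  | cons e s ih =>
    cases t with
    | nil => exact HidTr_nil ht hs
    | cons e' t =>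
      have hs' : seqT s (stepT e v) ∈ HidTr := hs
      have ht' : seqT t (stepT e' v) ∈ HidTr := ht
      cases e <;> cases e'
      · rw [ih t hs' ht']
      · exact (not_both t s ht' hs').elim
      · exact (not_both s t hs' ht').elim
      · rw [ih t hs' ht']

/-! ### Matrix norms -/

lemma opNorm_nonneg (M : Matrix (Fin 2) (Fin 2) ℝ) : 0 ≤ opNorm M := norm_nonneg _

lemma opNorm_mul_le (M N : Matrix (Fin 2) (Fin 2) ℝ) : opNorm (M * N) ≤ opNorm M * opNorm N := by
  unfold opNorm; rw [map_mul]; exact norm_mul_le _ _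

lemma opNorm_sub_le (M N : Matrix (Fin 2) (Fin 2) ℝ) : opNorm (M - N) ≤ opNorm M + opNorm N := by
  unfold opNorm; rw [map_sub]; exact norm_sub_le _ _

lemma opNorm_smul (t : ℝ) (M : Matrix (Fin 2) (Fin 2) ℝ) : opNorm (t • M) = |t| * opNorm M := by
  unfold opNorm; rw [map_smul, norm_smul, Real.norm_eq_abs]

lemma abs_apply_le_opNorm (M : Matrix (Fin 2) (Fin 2) ℝ) (i j : Fin 2) : |M i j| ≤ opNorm M := by
  have h1 := (Matrix.toEuclideanCLM (𝕜 := ℝ) M).le_opNorm (EuclideanSpace.single j 1)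
  have h2 := PiLp.norm_apply_le (Matrix.toEuclideanCLM (𝕜 := ℝ) M (EuclideanSpace.single j 1)) i
  have h3 : (Matrix.toEuclideanCLM (𝕜 := ℝ) M (EuclideanSpace.single j 1)) i = M i j := by
    rw [Matrix.ofLp_toEuclideanCLM]
    simp
  rw [h3, Real.norm_eq_abs] at h2
  simpa [opNorm] using h2.trans h1

/-- The sum of the absolute values of the entries, a submultiplicative norm. -/
def eNorm (M : Matrix (Fin 2) (Fin 2) ℝ) : ℝ := |M 0 0| + |M 0 1| + |M 1 0| + |M 1 1|

lemma eNorm_nonneg (M : Matrix (Fin 2) (Fin 2) ℝ) : 0 ≤ eNorm M := by unfold eNorm; positivity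

lemma eNorm_le (M : Matrix (Fin 2) (Fin 2) ℝ) : eNorm M ≤ 4 * opNorm M := by
  have := abs_apply_le_opNorm M
  unfold eNorm
  linarith [this 0 0, this 0 1, this 1 0, this 1 1]

lemma eNorm_mul_le (M N : Matrix (Fin 2) (Fin 2) ℝ) : eNorm (M * N) ≤ eNorm M * eNorm N := by
  have h (i j : Fin 2) : |(M * N) i j| ≤ |M i 0| * |N 0 j| + |M i 1| * |N 1 j| := by
    rw [Matrix.mul_apply, Fin.sum_univ_two, ← abs_mul, ← abs_mul]; exact abs_add_le _ _
  have p (i j k l : Fin 2) : 0 ≤ |M i j| * |N k l| := by positivity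
  unfold eNorm
  nlinarith [h 0 0, h 0 1, h 1 0, h 1 1, p 0 0 1 0, p 0 0 1 1, p 0 1 0 0, p 0 1 0 1,
    p 1 0 1 0, p 1 0 1 1, p 1 1 0 0, p 1 1 0 1]

lemma eNorm_add_le (M N : Matrix (Fin 2) (Fin 2) ℝ) : eNorm (M + N) ≤ eNorm M + eNorm N := by
  have h (i j : Fin 2) : |(M + N) i j| ≤ |M i j| + |N i j| := abs_add_le _ _
  unfold eNorm
  linarith [h 0 0, h 0 1, h 1 0, h 1 1]

lemma abs_le_eNorm_smul_one (r : ℝ) : |r| ≤ eNorm (r • (1 : Matrix (Fin 2) (Fin 2) ℝ)) := by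
  simp [eNorm]

lemma eNorm_inv (M : SL2) : eNorm (M⁻¹ : SL2) = eNorm M := by
  rw [Matrix.SpecialLinearGroup.coe_inv, Matrix.adjugate_fin_two]
  simp [eNorm]; ring

/-- It is enough to bound below the square of the entry norm. -/
lemma unifHyp_of_eNorm {A B : SL2} {C lam : ℝ} (hC : 0 < C) (hl : 1 < lam)
    (h : ∀ w : List Bool, C * lam ^ w.length ≤ eNorm (pairProd A B w) ^ 2) : UnifHypPair A B := by
  refine ⟨√C / 4, by positivity, √lam, by rw [gt_iff_lt, Real.lt_sqrt] <;> norm_num [hl], ?_⟩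
  intro w _
  have h1 := h w
  have h2 : √C * √lam ^ w.length ≤ eNorm (pairProd A B w) := by
    apply le_of_sq_le_sq _ (eNorm_nonneg _)
    rw [mul_pow, ← pow_mul, mul_comm _ 2, pow_mul, Real.sq_sqrt hC.le, Real.sq_sqrt (by linarith)]
    exact h1
  have := eNorm_le (pairProd A B w)
  linarith

/-! ### Traces of products of a uniformly hyperbolic pair -/

/-- The Cayley–Hamilton theorem for `2 × 2` matrices of determinant one. -/
lemma cayley (M : SL2) : (M : Matrix (Fin 2) (Fin 2) ℝ) * (M : Matrix (Fin 2) (Fin 2) ℝ) =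
    trace2 M • (M : Matrix (Fin 2) (Fin 2) ℝ) - 1 := by
  have h := det_eq M
  rw [trace2_eq]
  ext i j
  fin_cases i <;> fin_cases j <;>
    simp [Matrix.mul_apply, Fin.sum_univ_two, Matrix.smul_apply] <;> linarith

/-- Powers of `M` grow at most at the rate `|tr M| + 1`. -/
lemma opNorm_pow_le (M : SL2) : ∃ K > 0, ∀ k : ℕ,
    opNorm ((M ^ k : SL2) : Matrix (Fin 2) (Fin 2) ℝ) ≤ K * (|trace2 M| + 1) ^ k := by
  set t := trace2 M
  refine ⟨opNorm M + opNorm 1 + 1, by linarith [opNorm_nonneg M, opNorm_nonneg 1], ?_⟩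
  set K := opNorm M + opNorm 1 + 1 with hK
  have hM := opNorm_nonneg M
  have h1 := opNorm_nonneg 1
  have ht : 1 ≤ |t| + 1 := by linarith [abs_nonneg t]
  have key : ∀ k : ℕ, opNorm ((M ^ k : SL2) : Matrix (Fin 2) (Fin 2) ℝ) ≤ K * (|t| + 1) ^ k ∧
      opNorm ((M ^ (k + 1) : SL2) : Matrix (Fin 2) (Fin 2) ℝ) ≤ K * (|t| + 1) ^ (k + 1) := by
    intro k
    induction k with
    | zero =>
      refine ⟨by simp; linarith, ?_⟩
      simp only [zero_add, pow_one]
      nlinarith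
    | succ k ih =>
      refine ⟨ih.2, ?_⟩
      have e : ((M ^ (k + 1 + 1) : SL2) : Matrix (Fin 2) (Fin 2) ℝ) =
          t • ((M ^ (k + 1) : SL2) : Matrix (Fin 2) (Fin 2) ℝ) - (M ^ k : SL2) := by
        simp only [Matrix.SpecialLinearGroup.coe_pow]
        rw [pow_succ, pow_succ, mul_assoc, cayley, mul_sub, mul_smul_comm, mul_one]
      rw [e]
      refine (opNorm_sub_le _ _).trans ?_
      rw [opNorm_smul]
      have h2 : K * (|t| + 1) ^ k ≤ K * (|t| + 1) ^ (k + 1) := by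
        gcongr
        · omega
      calc _ ≤ |t| * (K * (|t| + 1) ^ (k + 1)) + K * (|t| + 1) ^ (k + 1) := by
            gcongr
            · exact ih.2
            · exact ih.1.trans h2
        _ = _ := by ring
  exact fun k => (key k).1

lemma le_of_pow_bound {C K a b : ℝ} (hC : 0 < C) (hb : 0 < b)
    (h : ∀ k : ℕ, 0 < k → C * a ^ k ≤ K * b ^ k) : a ≤ b := by
  by_contra! hlt
  have h1 : 1 < a / b := (one_lt_div hb).2 hlt
  obtain ⟨n, hn⟩ := pow_unbounded_of_one_lt (K / C) h1
  have h2 : (a / b) ^ n ≤ (a / b) ^ (n + 1) := pow_le_pow_right₀ h1.le (by omega)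
  have h3 := h (n + 1) (by omega)
  have h4 : K / C < a ^ (n + 1) / b ^ (n + 1) := by rw [← div_pow]; linarith
  rw [div_lt_div_iff₀ hC (by positivity)] at h4
  linarith

lemma pairProd_append (A B : SL2) (v w : List Bool) :
    pairProd A B (v ++ w) = pairProd A B w * pairProd A B v := by
  simp [pairProd]

lemma pairProd_flatten_replicate (A B : SL2) (w : List Bool) (k : ℕ) :
    pairProd A B (List.replicate k w).flatten = pairProd A B w ^ k := by
  induction k with
  | zero => simp [pairProd]
  | succ k ih => rw [List.replicate_succ, List.flatten_cons, pairProd_append, ih, pow_succ]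

/-- A uniform bound on the norms of all powers of a product bounds its spectral radius, hence its
trace. -/
lemma le_trace {A B : SL2} {C lam : ℝ} (hC : 0 < C)
    (h : ∀ w : List Bool, w ≠ [] →
      opNorm (pairProd A B w : Matrix (Fin 2) (Fin 2) ℝ) ≥ C * lam ^ w.length)
    (w : List Bool) (hw : w ≠ []) : lam ^ w.length ≤ |trace2 (pairProd A B w)| + 1 := by
  obtain ⟨K, -, hK⟩ := opNorm_pow_le (pairProd A B w)
  refine le_of_pow_bound (K := K) hC (by positivity) fun k hk => ?_
  refine le_trans ?_ (hK k)
  rw [← pairProd_flatten_replicate, ← pow_mul]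
  have := h (List.replicate k w).flatten (by simp [hw]; omega)
  simpa [mul_comm] using this

/-- Products of a uniformly hyperbolic pair are hyperbolic matrices: otherwise
`tr M² = (tr M)² - 2` keeps the traces of the powers `M ^ (2 ^ j)` bounded by `2`. -/
lemma two_lt_trace {A B : SL2} {C lam : ℝ} (hC : 0 < C) (hl : 1 < lam)
    (h : ∀ w : List Bool, w ≠ [] →
      opNorm (pairProd A B w : Matrix (Fin 2) (Fin 2) ℝ) ≥ C * lam ^ w.length)
    (w : List Bool) (hw : w ≠ []) : 2 < |trace2 (pairProd A B w)| := by
  by_contra! hle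
  have key : ∀ j : ℕ, |trace2 (pairProd A B w ^ (2 ^ j))| ≤ 2 := by
    intro j
    induction j with
    | zero => simpa using hle
    | succ j ih =>
      rw [pow_succ 2 j, pow_mul, pow_two]
      set M := pairProd A B w ^ (2 ^ j)
      have : trace2 (M * M) = trace2 M ^ 2 - 2 := by
        have := det_eq M
        rw [trace2_mul, trace2_eq]; nlinarith
      rw [this, abs_le]
      rw [abs_le] at ih
      constructor <;> nlinarith
  obtain ⟨n, hn⟩ := pow_unbounded_of_one_lt 3 hl
  have h1 := le_trace hC h (List.replicate (2 ^ n) w).flatten (by simp [hw])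
  rw [pairProd_flatten_replicate] at h1
  have h2 : n ≤ (List.replicate (2 ^ n) w).flatten.length := by
    have := List.length_pos_iff.2 hw
    simp only [List.length_flatten, List.map_replicate, List.sum_replicate, smul_eq_mul]
    have := (Nat.lt_two_pow_self (n := n)).le
    nlinarith
  have h3 : lam ^ n ≤ _ := pow_le_pow_right₀ hl.le h2
  linarith [key n]

/-! ### The descent on traces -/

/-- The triples of `LinkTr` for which moreover the trace of the commutator, equal to
`x² + y² + z² - xyz - 2`, is at least `2`. Geometrically the axes of the two matrices do not cross
and are oriented in opposite directions. These are the triples to which the descent applies. -/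
def WeakLinkTr : Set (ℝ × ℝ × ℝ) :=
  {v | 2 < |v.1| ∧ 2 < |v.2.1| ∧ 2 < |v.2.2| ∧ 0 < v.1 * v.2.1 * v.2.2 ∧
    4 ≤ v.1 ^ 2 + v.2.1 ^ 2 + v.2.2 ^ 2 - v.1 * v.2.1 * v.2.2 ∧
    2 * |v.2.2| < |v.1| * |v.2.1|}

lemma descent_ineq_aux {X Y Z : ℝ} (hX : 2 < X) (hY : 2 < Y) (hZ : 2 < Z)
    (h4 : 4 ≤ X ^ 2 + Y ^ 2 + Z ^ 2 - X * Y * Z) (h : 2 * Z < X * Y) (hXY : X ≤ Y) :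
    X * Z < 2 * Y := by
  by_contra! hle
  -- The quadratic polynomial `X² + Y² + Z² - XYZ - 4` in `Z` is convex and negative at both ends
  -- of the interval `[2Y/X, XY/2]`; this is the chord estimate, cleared of denominators.
  have h1 : 0 ≤ (X * Z - 2 * Y) * (X * Y - 2 * Z) :=
    mul_nonneg (by linarith) (by linarith)
  have h2 : 2 * X < Y * Z := by nlinarith
  have h3 : (X ^ 2 - 4) * (2 * X - Y * Z) < 0 :=
    mul_neg_of_pos_of_neg (by nlinarith) (by linarith)
  have h5 : 0 ≤ 2 * X * (X ^ 2 + Y ^ 2 + Z ^ 2 - X * Y * Z - 4) :=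
    mul_nonneg (by linarith) (by linarith)
  nlinarith

/-- The inequality that selects the generator to be applied at each step of the descent. -/
lemma descent_ineq {X Y Z : ℝ} (hX : 2 < X) (hY : 2 < Y) (hZ : 2 < Z)
    (h4 : 4 ≤ X ^ 2 + Y ^ 2 + Z ^ 2 - X * Y * Z) (h : 2 * Z < X * Y) :
    X * Z < 2 * Y ∨ Y * Z < 2 * X := by
  rcases le_total X Y with hXY | hXY
  · exact Or.inl (descent_ineq_aux hX hY hZ h4 h hXY)
  · exact Or.inr (descent_ineq_aux hY hX hZ (by linarith) (by linarith) hXY)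

lemma swapT_WeakLinkTr (v : ℝ × ℝ × ℝ) : swapT v ∈ WeakLinkTr ↔ v ∈ WeakLinkTr := by
  simp only [WeakLinkTr, swapT, Set.mem_ofPred_eq]
  rw [mul_comm v.2.1 v.1, mul_comm |v.2.1|, add_comm (v.2.1 ^ 2)]; tauto

/-- A quantity that does not increase along the descent. -/
def potT (v : ℝ × ℝ × ℝ) : ℝ := (|v.1| + 1) * (|v.2.1| + 1)

lemma swapT_potT (v : ℝ × ℝ × ℝ) : potT (swapT v) = potT v := by
  simp only [potT, swapT]; ring

lemma weakLink_step_true {v : ℝ × ℝ × ℝ} (hv : v ∈ WeakLinkTr)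
    (h : |v.1| * |v.2.2| < 2 * |v.2.1|) (h2 : 2 < |(stepT true v).2.2|)
    (hn : stepT true v ∉ HidTr) : stepT true v ∈ WeakLinkTr ∧ potT (stepT true v) ≤ potT v := by
  obtain ⟨x, y, z⟩ := v
  obtain ⟨hx, hy, hz, h0, h4, h1⟩ := hv
  simp only [WeakLinkTr, HidTr, potT, stepT, Set.mem_ofPred_eq, if_true] at *
  have hw : 0 < x * z * (x * z - y) := by
    by_contra! hle
    refine hn ⟨hx, hz, h2, lt_of_le_of_ne hle ?_⟩
    rw [← abs_pos, abs_mul, abs_mul]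
    have := mul_pos (by linarith : 0 < |x|) (by linarith : 0 < |z|)
    exact mul_pos this (by linarith)
  refine ⟨⟨hx, hz, h2, hw, by linarith, ?_⟩, ?_⟩
  · have hw' := hw
    rw [prod_third h0] at hw'
    have hxz : 0 < |x| * |z| := mul_pos (by linarith) (by linarith)
    rw [abs_third h0, abs_of_pos (pos_of_mul_pos_right hw' hxz.le)]
    linarith
  · have : |z| ≤ |y| := by nlinarith
    gcongr

/-- The trace of the commutator is invariant under the generators, so a well chosen step stays in
`WeakLinkTr` unless it makes the product elliptic or parabolic or reaches `HidTr`. -/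
lemma weakLink_step {v : ℝ × ℝ × ℝ} (hv : v ∈ WeakLinkTr) : ∃ e : Bool,
    2 < |(stepT e v).2.2| → stepT e v ∉ HidTr →
      stepT e v ∈ WeakLinkTr ∧ potT (stepT e v) ≤ potT v := by
  have hv' := hv
  obtain ⟨hx, hy, hz, h0, h4, h1⟩ := hv'
  rw [abs_prod h0, ← sq_abs v.1, ← sq_abs v.2.1, ← sq_abs v.2.2] at h4
  rcases descent_ineq hx hy hz h4 h1 with h | h
  · exact ⟨true, weakLink_step_true hv h⟩
  · refine ⟨false, ?_⟩
    rw [stepT_false, swapT_HidTr, swapT_WeakLinkTr, swapT_potT, ← swapT_potT v]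
    exact weakLink_step_true ((swapT_WeakLinkTr v).2 hv) h

/-- If the descent never stops, it produces arbitrarily long pairs of words whose traces stay
bounded. -/
lemma exists_long_words {A B : SL2}
    (htr : ∀ w : List Bool, w ≠ [] → 2 < |trace2 (pairProd A B w)|) (n : ℕ) :
    ∀ w₁ w₂ : List Bool, w₁ ≠ [] → w₂ ≠ [] →
      trT (pairProd A B w₁, pairProd A B w₂) ∈ WeakLinkTr →
      (∀ s, applySeq s (pairProd A B w₁, pairProd A B w₂) ∉ Hid) →
      ∃ v₁ v₂ : List Bool, v₁ ≠ [] ∧ v₂ ≠ [] ∧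
        n + w₁.length + w₂.length ≤ v₁.length + v₂.length ∧
        potT (trT (pairProd A B v₁, pairProd A B v₂)) ≤
          potT (trT (pairProd A B w₁, pairProd A B w₂)) := by
  induction n with
  | zero => exact fun w₁ w₂ h₁ h₂ _ _ => ⟨w₁, w₂, h₁, h₂, by omega, le_rfl⟩
  | succ n ih =>
    intro w₁ w₂ h₁ h₂ hw hn
    have l₁ := List.length_pos_iff.2 h₁
    have l₂ := List.length_pos_iff.2 h₂
    obtain ⟨e, he⟩ := weakLink_step hw
    obtain ⟨u₁, u₂, k₁, k₂, hl, hu⟩ : ∃ u₁ u₂ : List Bool, u₁ ≠ [] ∧ u₂ ≠ [] ∧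
        1 + w₁.length + w₂.length ≤ u₁.length + u₂.length ∧
        (if e then Fplus (pairProd A B w₁, pairProd A B w₂)
          else Fminus (pairProd A B w₁, pairProd A B w₂)) =
          (pairProd A B u₁, pairProd A B u₂) := by
      cases e
      · exact ⟨w₁ ++ w₂, w₂, by simp [h₁], h₂, by simp; omega, by simp [Fminus, pairProd_append]⟩
      · exact ⟨w₁, w₂ ++ w₁, h₁, by simp [h₁], by simp; omega, by simp [Fplus, pairProd_append]⟩
    rw [← trT_step, hu] at he
    have hn' : ∀ s, applySeq s (pairProd A B u₁, pairProd A B u₂) ∉ Hid := by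
      intro s
      rw [← hu]; exact hn (e :: s)
    obtain ⟨hW, hp⟩ := he
      (by have := htr (u₂ ++ u₁) (by simp [k₁]); rwa [pairProd_append] at this) (hn' [])
    obtain ⟨v₁, v₂, m₁, m₂, hl', hp'⟩ := ih u₁ u₂ k₁ k₂ hW hn'
    exact ⟨v₁, v₂, m₁, m₂, by omega, hp'.trans hp⟩

/-- The descent stops for a uniformly hyperbolic pair, because traces of long words are large; it
can only end in `H_id`. -/
lemma exists_Hid_of_weakLink {A B : SL2} (hU : UnifHypPair A B) (hw : trT (A, B) ∈ WeakLinkTr) :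
    ∃ s, applySeq s (A, B) ∈ Hid := by
  obtain ⟨C, hC, lam, hl, h⟩ := hU
  by_contra! hn
  have eA : pairProd A B [true] = A := by simp [pairProd]
  have eB : pairProd A B [false] = B := by simp [pairProd]
  obtain ⟨n, hbig⟩ := pow_unbounded_of_one_lt (potT (trT (A, B))) hl
  obtain ⟨v₁, v₂, m₁, m₂, hlen, hp⟩ := exists_long_words (two_lt_trace hC hl h) n [true] [false]
    (by simp) (by simp) (by rwa [eA, eB]) (by rwa [eA, eB])
  rw [eA, eB] at hp
  have h1 : lam ^ (v₁.length + v₂.length) ≤ potT (trT (pairProd A B v₁, pairProd A B v₂)) := by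
    rw [pow_add]
    exact mul_le_mul (le_trace hC h v₁ m₁) (le_trace hC h v₂ m₂) (by positivity)
      (by positivity)
  have h2 : lam ^ n ≤ lam ^ (v₁.length + v₂.length) := pow_le_pow_right₀ hl.le (by omega)
  linarith

/-! ### Topology of the projective line -/

/-- The point of the projective line represented by a nonzero vector. -/
noncomputable abbrev pmk (v : Fin 2 → ℝ) (hv : v ≠ 0) : P1 := Projectivization.mk ℝ v hv

lemma projAct_pmk (A : SL2) (v : Fin 2 → ℝ) (hv : v ≠ 0) (hw : (A : Matrix (Fin 2) (Fin 2) ℝ) *ᵥ v ≠ 0) :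
    projAct A (pmk v hv) = pmk ((A : Matrix (Fin 2) (Fin 2) ℝ) *ᵥ v) hw := rfl

lemma continuous_pmk : Continuous fun v : {v : Fin 2 → ℝ // v ≠ 0} => pmk v.1 v.2 :=
  continuous_quotient_mk'

lemma isOpen_P1_iff (S : Set P1) :
    IsOpen S ↔ IsOpen {v : {v : Fin 2 → ℝ // v ≠ 0} | pmk v.1 v.2 ∈ S} := Iff.rfl

/-- A continuous function on the plane, homogeneous of degree two, so that its sign is defined
on the projective line. -/
def Quad (q : (Fin 2 → ℝ) → ℝ) : Prop :=
  Continuous q ∧ ∀ (c : ℝ) (v : Fin 2 → ℝ), q (c • v) = c ^ 2 * q v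

lemma Quad.neg {q : (Fin 2 → ℝ) → ℝ} (h : Quad q) : Quad (fun v => - q v) :=
  ⟨h.1.neg, fun c v => by simp only [h.2]; ring⟩

lemma Quad.rep {q : (Fin 2 → ℝ) → ℝ} (h : Quad q) (v : Fin 2 → ℝ) (hv : v ≠ 0) :
    ∃ c : ℝ, 0 < c ∧ q (pmk v hv).rep = c * q v := by
  obtain ⟨a, ha⟩ := Projectivization.exists_smul_eq_mk_rep ℝ v hv
  refine ⟨(a : ℝ) ^ 2, by have := a.ne_zero; positivity, ?_⟩
  rw [← ha, Units.smul_def, h.2]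

lemma Quad.rep_pos {q : (Fin 2 → ℝ) → ℝ} (h : Quad q) (v : Fin 2 → ℝ) (hv : v ≠ 0) :
    0 < q (pmk v hv).rep ↔ 0 < q v := by
  obtain ⟨c, hc, e⟩ := h.rep v hv
  rw [e]; exact mul_pos_iff_of_pos_left hc

lemma Quad.isOpen {q : (Fin 2 → ℝ) → ℝ} (h : Quad q) : IsOpen {x : P1 | 0 < q x.rep} := by
  rw [isOpen_P1_iff]
  simp only [Set.mem_ofPred_eq, h.rep_pos]
  exact isOpen_lt continuous_const (h.1.comp continuous_subtype_val)

/-- A quadratic function without zeros on a connected set has constant sign there. -/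
lemma Quad.sign {q : (Fin 2 → ℝ) → ℝ} (h : Quad q) {I : Set P1} (hI : IsPreconnected I)
    (h0 : ∀ x ∈ I, q x.rep ≠ 0) : (∀ x ∈ I, 0 < q x.rep) ∨ (∀ x ∈ I, q x.rep < 0) := by
  have := hI.subset_or_subset h.isOpen h.neg.isOpen
    (Set.disjoint_left.2 fun x h1 h2 => by
      simp only [Set.mem_ofPred_eq] at h1 h2; linarith)
    (fun x hx => by
      simp only [Set.mem_union, Set.mem_ofPred_eq, Left.neg_pos_iff]
      exact (h0 x hx).lt_or_gt.symm)
  rcases this with h1 | h1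
  · exact Or.inl h1
  · exact Or.inr fun x hx => by simpa using h1 hx

/-- The product of the two coordinates given by `Q`. -/
def qf (Q : Matrix (Fin 2) (Fin 2) ℝ) (v : Fin 2 → ℝ) : ℝ := (Q *ᵥ v) 0 * (Q *ᵥ v) 1

lemma quad_mul (l₁ l₂ : (Fin 2 → ℝ) →ₗ[ℝ] ℝ) : Quad (fun v => l₁ v * l₂ v) :=
  ⟨(LinearMap.continuous_of_finiteDimensional l₁).mul
    (LinearMap.continuous_of_finiteDimensional l₂), fun c v => by
      simp only [map_smul, smul_eq_mul]; ring⟩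

lemma quad_qf (Q : Matrix (Fin 2) (Fin 2) ℝ) : Quad (qf Q) :=
  quad_mul ((LinearMap.proj 0).comp (Matrix.mulVecLin Q)) ((LinearMap.proj 1).comp (Matrix.mulVecLin Q))

lemma inv_mulVec {P Q : Matrix (Fin 2) (Fin 2) ℝ} (h : Q * P = 1) (v : Fin 2 → ℝ) :
    Q *ᵥ (P *ᵥ v) = v := by rw [Matrix.mulVec_mulVec, h, Matrix.one_mulVec]

lemma mulVec_ne_zero {P Q : Matrix (Fin 2) (Fin 2) ℝ} (h : Q * P = 1) {v : Fin 2 → ℝ}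
    (hv : v ≠ 0) : P *ᵥ v ≠ 0 := fun h0 => hv (by rw [← inv_mulVec h v, h0, Matrix.mulVec_zero])

lemma affine_ne_zero (t : ℝ) : ![t, 1 - t] ≠ 0 := by
  intro h
  have h0 := congrFun h 0
  have h1 := congrFun h 1
  simp at h0 h1
  linarith

/-- The affine chart of the projective line attached to a basis. -/
noncomputable def chart {P Q : Matrix (Fin 2) (Fin 2) ℝ} (h : Q * P = 1) (t : ℝ) : P1 :=
  pmk (P *ᵥ ![t, 1 - t]) (mulVec_ne_zero h (affine_ne_zero t))

lemma continuous_chart {P Q : Matrix (Fin 2) (Fin 2) ℝ} (h : Q * P = 1) :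
    Continuous (chart h) := by
  refine continuous_pmk.comp (f := fun t : ℝ => (⟨P *ᵥ ![t, 1 - t], mulVec_ne_zero h
    (affine_ne_zero t)⟩ : {v : Fin 2 → ℝ // v ≠ 0})) (Continuous.subtype_mk ?_ _)
  refine (LinearMap.continuous_of_finiteDimensional (Matrix.mulVecLin P)).comp
    (f := fun t : ℝ => ![t, 1 - t]) ?_
  refine continuous_pi fun i => ?_
  fin_cases i <;> simp <;> fun_prop

lemma pmk_eq_of_smul {v w : Fin 2 → ℝ} (hv : v ≠ 0) (hw : w ≠ 0) (c : ℝ) (h : v = c • w) :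
    pmk v hv = pmk w hw := by
  rw [Projectivization.mk_eq_mk_iff']
  exact ⟨c, h.symm⟩

/-- A point with coordinates of nonzero sum lies in the chart. -/
lemma pmk_eq_chart {P Q : Matrix (Fin 2) (Fin 2) ℝ} (h : Q * P = 1) (v : Fin 2 → ℝ) (hv : v ≠ 0)
    (hs : (Q *ᵥ v) 0 + (Q *ᵥ v) 1 ≠ 0) :
    pmk v hv = chart h ((Q *ᵥ v) 0 / ((Q *ᵥ v) 0 + (Q *ᵥ v) 1)) := by
  refine pmk_eq_of_smul _ _ ((Q *ᵥ v) 0 + (Q *ᵥ v) 1) ?_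
  rw [← Matrix.mulVec_smul]
  have : v = P *ᵥ (Q *ᵥ v) := (inv_mulVec (mul_eq_one_comm.1 h) v).symm
  conv_lhs => rw [this]
  congr 1
  generalize Q *ᵥ v = w at *
  ext i
  fin_cases i
  · simp only [Fin.zero_eta, Pi.smul_apply, Matrix.cons_val_zero, smul_eq_mul]
    field_simp
  · simp only [Fin.mk_one, Pi.smul_apply, Matrix.cons_val_one, Matrix.cons_val_fin_one, smul_eq_mul]
    field_simp
    ring

lemma quad_form_chart {P Q : Matrix (Fin 2) (Fin 2) ℝ} (h : Q * P = 1) (t : ℝ) :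
    qf Q (P *ᵥ ![t, 1 - t]) = t * (1 - t) := by
  rw [qf, inv_mulVec h]; simp

/-- In suitable coordinates an interval lies in the open cone spanned by two basis vectors. -/
lemma exists_coarse_basis {I : Set P1} (hI : IsOpenInterval I) :
    ∃ P Q : Matrix (Fin 2) (Fin 2) ℝ, Q * P = 1 ∧ ∀ x ∈ I, 0 < qf Q x.rep := by
  obtain ⟨-, hc, x, hx, y, hy, hxy⟩ := hI
  set F : Matrix (Fin 2) (Fin 2) ℝ := !![x.rep 0, y.rep 0; x.rep 1, y.rep 1] with hF
  have hdet : F.det ≠ 0 := by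
    intro h0
    rw [hF, Matrix.det_fin_two_of] at h0
    apply hxy
    have hxr := x.rep_nonzero
    have hyr := y.rep_nonzero
    rw [← x.mk_rep, ← y.mk_rep]
    by_cases hy0 : y.rep 0 = 0
    · have hy1 : y.rep 1 ≠ 0 := fun h1 => hyr (by ext i; fin_cases i <;> simp [hy0, h1])
      have hx0 : x.rep 0 = 0 := by
        rw [hy0, zero_mul, sub_zero] at h0
        exact (mul_eq_zero.1 h0).resolve_right hy1
      refine pmk_eq_of_smul _ _ (x.rep 1 / y.rep 1) ?_
      ext i; fin_cases i <;> simp [hy0, hx0, hy1]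
    · refine pmk_eq_of_smul _ _ (x.rep 0 / y.rep 0) ?_
      ext i; fin_cases i
      · simp [hy0]
      · simp only [Fin.mk_one, Pi.smul_apply, smul_eq_mul]
        field_simp
        linarith
  have hFF : F⁻¹ * F = 1 := Matrix.nonsing_inv_mul F (isUnit_iff_ne_zero.2 hdet)
  have hFF' : F * F⁻¹ = 1 := mul_eq_one_comm.1 hFF
  have hne : ∀ z ∈ I, qf F⁻¹ z.rep ≠ 0 := by
    intro z hz h0
    have hzr := inv_mulVec hFF' z.rep
    have hz0 := z.rep_nonzero
    rcases mul_eq_zero.1 h0 with h | h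
    · apply hy
      have : z = y := by
        rw [← z.mk_rep, ← y.mk_rep]
        refine pmk_eq_of_smul _ _ ((F⁻¹ *ᵥ z.rep) 1) ?_
        generalize F⁻¹ *ᵥ z.rep = w at h hzr ⊢
        rw [← hzr]
        ext i; fin_cases i <;>
          simp [hF, Matrix.mulVec, dotProduct, Fin.sum_univ_two, h, mul_comm]
      exact this ▸ hz
    · apply hx
      have : z = x := by
        rw [← z.mk_rep, ← x.mk_rep]
        refine pmk_eq_of_smul _ _ ((F⁻¹ *ᵥ z.rep) 0) ?_
        generalize F⁻¹ *ᵥ z.rep = w at h hzr ⊢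
        rw [← hzr]
        ext i; fin_cases i <;>
          simp [hF, Matrix.mulVec, dotProduct, Fin.sum_univ_two, h, mul_comm]
      exact this ▸ hz
  rcases (quad_qf F⁻¹).sign hc.isPreconnected hne with h | h
  · exact ⟨F, F⁻¹, hFF, h⟩
  · refine ⟨F * !![1, 0; 0, -1], !![1, 0; 0, -1] * F⁻¹, ?_, fun z hz => ?_⟩
    · rw [Matrix.mul_assoc, ← Matrix.mul_assoc F⁻¹, hFF, Matrix.one_mul]
      ext i j; fin_cases i <;> fin_cases j <;> simp [Matrix.mul_apply, Fin.sum_univ_two]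
    · have := h z hz
      simp only [qf, ← Matrix.mulVec_mulVec] at this ⊢
      generalize F⁻¹ *ᵥ z.rep = w at *
      simp [Matrix.mulVec, dotProduct, Fin.sum_univ_two]
      linarith

/-- An open interval of the projective line is the image of the open cone spanned by a basis. -/
lemma interval_structure {I : Set P1} (hI : IsOpenInterval I) :
    ∃ P Q : Matrix (Fin 2) (Fin 2) ℝ, Q * P = 1 ∧ ∀ v hv, pmk v hv ∈ I ↔ 0 < qf Q v := by
  obtain ⟨F, G, hGF, hpos⟩ := exists_coarse_basis hI
  obtain ⟨ho, hc, -⟩ := hI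
  set γ := chart hGF
  have hγ : Continuous γ := continuous_chart hGF
  set J : Set ℝ := γ ⁻¹' I
  have hJo : IsOpen J := ho.preimage hγ
  have hJ01 : ∀ t ∈ J, 0 < t ∧ t < 1 := by
    intro t ht
    have := hpos _ ht
    rw [show γ t = pmk _ (mulVec_ne_zero hGF (affine_ne_zero t)) from rfl,
      (quad_qf G).rep_pos, quad_form_chart hGF] at this
    constructor <;> nlinarith
  -- points of `I` are in the chart
  have hchart : ∀ v hv, pmk v hv ∈ I → 0 < (G *ᵥ v) 0 * (G *ᵥ v) 1 ∧
      pmk v hv = γ ((G *ᵥ v) 0 / ((G *ᵥ v) 0 + (G *ᵥ v) 1)) := by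
    intro v hv h
    have h1 : 0 < qf G v := ((quad_qf G).rep_pos v hv).1 (hpos _ h)
    refine ⟨h1, pmk_eq_chart hGF v hv ?_⟩
    intro h0
    have : (G *ᵥ v) 1 = - (G *ᵥ v) 0 := by linarith
    rw [qf, this] at h1
    nlinarith [sq_nonneg ((G *ᵥ v) 0)]
  have hJne : J.Nonempty := by
    obtain ⟨x, hx⟩ := hc.nonempty
    induction x using Projectivization.ind with
    | h v hv =>
      change pmk v hv ∈ I at hx
      refine ⟨(G *ᵥ v) 0 / ((G *ᵥ v) 0 + (G *ᵥ v) 1), ?_⟩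
      change γ _ ∈ I
      rw [← (hchart v hv hx).2]
      exact hx
  have hbb : BddBelow J := ⟨0, fun t ht => (hJ01 t ht).1.le⟩
  have hba : BddAbove J := ⟨1, fun t ht => (hJ01 t ht).2.le⟩
  -- a gap in `J` at `t` would be detected by a quadratic form vanishing at `γ t`
  have hJc : ∀ a ∈ J, ∀ b ∈ J, ∀ t, a < t → t < b → t ∈ J := by
    intro a ha b hb t hat htb
    by_contra ht
    let π : Fin 2 → (Fin 2 → ℝ) →ₗ[ℝ] ℝ := fun i =>
      LinearMap.proj (R := ℝ) (φ := fun _ : Fin 2 => ℝ) i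
    let l₁ : (Fin 2 → ℝ) →ₗ[ℝ] ℝ := (π 0 + π 1) ∘ₗ Matrix.mulVecLin G
    let l₂ : (Fin 2 → ℝ) →ₗ[ℝ] ℝ := ((1 - t) • π 0 - t • π 1) ∘ₗ Matrix.mulVecLin G
    have hq := quad_mul l₁ l₂
    have hγq : ∀ s, l₁ (F *ᵥ ![s, 1 - s]) * l₂ (F *ᵥ ![s, 1 - s]) = s - t := by
      intro s
      simp only [l₁, l₂, π, LinearMap.comp_apply, Matrix.mulVecLin_apply, inv_mulVec hGF]
      simp
      ring
    have := hq.sign hc.isPreconnected (by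
      intro x hx
      induction x using Projectivization.ind with
      | h v hv =>
        change pmk v hv ∈ I at hx
        change l₁ (pmk v hv).rep * l₂ (pmk v hv).rep ≠ 0
        rw [(hchart v hv hx).2]
        rw [(hchart v hv hx).2] at hx
        set s := (G *ᵥ v) 0 / ((G *ᵥ v) 0 + (G *ᵥ v) 1)
        obtain ⟨c, hc0, e⟩ := hq.rep _ (mulVec_ne_zero hGF (affine_ne_zero s))
        rw [hγq] at e
        show l₁ (γ s).rep * l₂ (γ s).rep ≠ 0
        rw [show γ s = pmk _ (mulVec_ne_zero hGF (affine_ne_zero s)) from rfl, e]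
        refine mul_ne_zero hc0.ne' (sub_ne_zero.2 ?_)
        rintro rfl
        exact ht hx)
    rcases this with h | h
    · have h1 := (hq.rep_pos _ (mulVec_ne_zero hGF (affine_ne_zero a))).1 (h _ ha)
      rw [hγq] at h1; linarith
    · have h1 := (hq.neg.rep_pos _ (mulVec_ne_zero hGF (affine_ne_zero b))).1
        (neg_pos.2 (h _ hb))
      rw [hγq] at h1; linarith
  set α := sInf J
  set β := sSup J
  have hα : ∀ t ∈ J, α < t := by
    intro t ht
    obtain ⟨ε, hε, hball⟩ := Metric.isOpen_iff.1 hJo t ht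
    have : t - ε / 2 ∈ J := hball (by
      rw [Metric.mem_ball, Real.dist_eq, abs_lt]; constructor <;> linarith)
    linarith [csInf_le hbb this]
  have hβ : ∀ t ∈ J, t < β := by
    intro t ht
    obtain ⟨ε, hε, hball⟩ := Metric.isOpen_iff.1 hJo t ht
    have : t + ε / 2 ∈ J := hball (by
      rw [Metric.mem_ball, Real.dist_eq, abs_lt]; constructor <;> linarith)
    linarith [le_csSup hba this]
  have hJ : ∀ t, t ∈ J ↔ α < t ∧ t < β := by
    intro t
    refine ⟨fun ht => ⟨hα t ht, hβ t ht⟩, fun ⟨h1, h2⟩ => ?_⟩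
    obtain ⟨a, ha, hat⟩ := exists_lt_of_csInf_lt hJne h1
    obtain ⟨b, hb, htb⟩ := exists_lt_of_lt_csSup hJne h2
    exact hJc a ha b hb t hat htb
  have hαβ : α < β := by
    obtain ⟨t, ht⟩ := hJne
    exact (hα t ht).trans (hβ t ht)
  have hd : β - α ≠ 0 := by linarith
  refine ⟨F * !![β, α; 1 - β, 1 - α],
    ((β - α)⁻¹ • !![1 - α, -α; -(1 - β), β]) * G, ?_, ?_⟩
  · rw [Matrix.mul_assoc, ← Matrix.mul_assoc G, hGF, Matrix.one_mul]
    ext i j; fin_cases i <;> fin_cases j <;>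
      simp [Matrix.mul_apply, Fin.sum_univ_two] <;> field_simp <;> ring
  · intro v hv
    have hq : qf (((β - α)⁻¹ • !![1 - α, -α; -(1 - β), β]) * G) v =
        ((β - α)⁻¹) ^ 2 * (((G *ᵥ v) 0 - α * ((G *ᵥ v) 0 + (G *ᵥ v) 1)) *
          (β * ((G *ᵥ v) 0 + (G *ᵥ v) 1) - (G *ᵥ v) 0)) := by
      simp only [qf, ← Matrix.mulVec_mulVec]
      generalize G *ᵥ v = w
      generalize (β - α)⁻¹ = κ
      simp [Matrix.mulVec, dotProduct, Fin.sum_univ_two]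
      ring
    rw [hq, mul_pos_iff_of_pos_left (by positivity)]
    constructor
    · intro h
      obtain ⟨hp, e⟩ := hchart v hv h
      rw [e] at h
      obtain ⟨h1, h2⟩ := (hJ _).1 h
      generalize G *ᵥ v = w at *
      have hs : w 0 + w 1 ≠ 0 := by
        intro h0
        have : w 1 = - w 0 := by linarith
        rw [this] at hp
        nlinarith [sq_nonneg (w 0)]
      have : (w 0 - α * (w 0 + w 1)) * (β * (w 0 + w 1) - w 0) =
          (w 0 + w 1) ^ 2 * ((w 0 / (w 0 + w 1) - α) * (β - w 0 / (w 0 + w 1))) := by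
        field_simp
      rw [this]
      exact mul_pos (by positivity) (mul_pos (by linarith) (by linarith))
    · intro h
      have hs : (G *ᵥ v) 0 + (G *ᵥ v) 1 ≠ 0 := by
        intro h0
        rw [h0] at h
        nlinarith [sq_nonneg ((G *ᵥ v) 0)]
      rw [pmk_eq_chart hGF v hv hs]
      show _ ∈ J
      rw [hJ]
      generalize G *ᵥ v = w at *
      have : (w 0 - α * (w 0 + w 1)) * (β * (w 0 + w 1) - w 0) =
          (w 0 + w 1) ^ 2 * ((w 0 / (w 0 + w 1) - α) * (β - w 0 / (w 0 + w 1))) := by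
        field_simp
      rw [this, mul_pos_iff_of_pos_left (by positivity)] at h
      constructor <;> nlinarith

/-! ### Pairs preserving a cone -/

/-- `± A` maps the closed cone spanned by the columns of `P` (with `Q = P⁻¹`) into its
interior. -/
def ConePos (P Q : Matrix (Fin 2) (Fin 2) ℝ) (A : SL2) : Prop :=
  ∃ ε : ℝ, (ε = 1 ∨ ε = -1) ∧
    ∀ i j, 0 < ε * (Q * (A : Matrix (Fin 2) (Fin 2) ℝ) * P) i j

/-- In some basis `A` and `B` both have, up to sign, positive entries. -/
def PosPair (A B : SL2) : Prop :=
  ∃ P Q : Matrix (Fin 2) (Fin 2) ℝ, Q * P = 1 ∧ ConePos P Q A ∧ ConePos P Q B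

lemma inv_mul_val (A : SL2) :
    ((A⁻¹ : SL2) : Matrix (Fin 2) (Fin 2) ℝ) * (A : Matrix (Fin 2) (Fin 2) ℝ) = 1 := by
  rw [← Matrix.SpecialLinearGroup.coe_mul, inv_mul_cancel, Matrix.SpecialLinearGroup.coe_one]

/-- If `Q = P⁻¹` carries the interval `I` to the open positive quadrant, a matrix which maps the
closure of `I` into `I` has, up to a global sign, positive entries in the basis given by `P`. -/
lemma conePos_of_maps {I : Set P1} {P Q : Matrix (Fin 2) (Fin 2) ℝ} (h : Q * P = 1)
    (hI : ∀ v hv, pmk v hv ∈ I ↔ 0 < qf Q v) {A : SL2} (hA : projAct A '' closure I ⊆ I) :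
    ConePos P Q A := by
  have hcl : ∀ t ∈ Set.Icc (0:ℝ) 1, chart h t ∈ closure I := by
    intro t ht
    rw [← closure_Ioo (by norm_num : (0:ℝ) ≠ 1)] at ht
    refine map_mem_closure (continuous_chart h) ht fun s hs => ?_
    rw [chart, hI, quad_form_chart h]
    exact mul_pos hs.1 (by linarith [hs.2])
  have key : ∀ t ∈ Set.Icc (0:ℝ) 1,
      0 < ((Q * (A : Matrix (Fin 2) (Fin 2) ℝ) * P) *ᵥ ![t, 1 - t]) 0 *
        ((Q * (A : Matrix (Fin 2) (Fin 2) ℝ) * P) *ᵥ ![t, 1 - t]) 1 := by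
    intro t ht
    have := hA (Set.mem_image_of_mem _ (hcl t ht))
    rw [chart, projAct_pmk _ _ _ (mulVec_ne_zero (inv_mul_val A)
      (mulVec_ne_zero h (affine_ne_zero t))), hI, qf] at this
    simpa only [Matrix.mulVec_mulVec, Matrix.mul_assoc] using this
  generalize hN : Q * (A : Matrix (Fin 2) (Fin 2) ℝ) * P = N at key
  simp only [Matrix.mulVec, dotProduct, Fin.sum_univ_two, Matrix.cons_val_zero,
    Matrix.cons_val_one, Matrix.cons_val_fin_one] at key
  have k1 := key 1 (by constructor <;> norm_num)
  have k0 := key 0 (by constructor <;> norm_num)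
  simp only [mul_one, sub_self, mul_zero, add_zero, sub_zero, zero_add] at k1 k0
  -- a change of sign along the first row would give a zero of the first coordinate
  have hs : 0 < N 0 0 * N 0 1 := by
    by_contra hneg
    have h0 : N 0 0 ≠ 0 := by rintro h0; simp [h0] at k1
    have h1 : N 0 1 ≠ 0 := by rintro h0; simp [h0] at k0
    have hlt : N 0 0 * N 0 1 < 0 := lt_of_le_of_ne (not_lt.1 hneg) (mul_ne_zero h0 h1)
    have hd : N 0 1 - N 0 0 ≠ 0 := by
      intro h2
      have : N 0 1 = N 0 0 := by linarith
      rw [this] at hlt; nlinarith [sq_nonneg (N 0 0)]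
    have e : N 0 0 * (N 0 1 / (N 0 1 - N 0 0)) + N 0 1 * (1 - N 0 1 / (N 0 1 - N 0 0)) = 0 := by
      field_simp; ring
    have hm := key (N 0 1 / (N 0 1 - N 0 0)) (by
      rcases mul_neg_iff.1 hlt with ⟨p, q⟩ | ⟨p, q⟩
      · exact ⟨div_nonneg_of_nonpos q.le (by linarith),
          (div_le_one_of_neg (by linarith)).2 (by linarith)⟩
      · exact ⟨div_nonneg q.le (by linarith), (div_le_one (by linarith)).2 (by linarith)⟩)
    rw [e] at hm; simp at hm
  rw [ConePos, hN]
  rcases mul_pos_iff.1 hs with ⟨p, q⟩ | ⟨p, q⟩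
  · have a := (pos_iff_pos_of_mul_pos k1).1 p
    have b := (pos_iff_pos_of_mul_pos k0).1 q
    refine ⟨1, Or.inl rfl, fun i j => ?_⟩
    fin_cases i <;> fin_cases j <;> simpa
  · have a := (neg_iff_neg_of_mul_pos k1).1 p
    have b := (neg_iff_neg_of_mul_pos k0).1 q
    refine ⟨-1, Or.inr rfl, fun i j => ?_⟩
    fin_cases i <;> fin_cases j <;> simpa

lemma posPair_of_H0 {A B : SL2} (h : (A, B) ∈ H0) : PosPair A B := by
  obtain ⟨I, hI, hA, hB⟩ := h
  obtain ⟨P, Q, hQP, hv⟩ := interval_structure hI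
  exact ⟨P, Q, hQP, conePos_of_maps hQP hv hA, conePos_of_maps hQP hv hB⟩

/-- A matrix with positive entries (up to sign) maps the closed cone into the open one. -/
lemma ConePos.maps {P Q : Matrix (Fin 2) (Fin 2) ℝ} (h : Q * P = 1) {A : SL2}
    (hA : ConePos P Q A) {v : Fin 2 → ℝ} (hv : v ≠ 0) (hq : 0 ≤ qf Q v) :
    0 < qf Q ((A : Matrix (Fin 2) (Fin 2) ℝ) *ᵥ v) := by
  obtain ⟨ε, hε, hpos⟩ := hA
  have hPQ : P * Q = 1 := mul_eq_one_comm.1 h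
  have hv' : Q *ᵥ v ≠ 0 := mulVec_ne_zero hPQ hv
  have e : Q *ᵥ ((A : Matrix (Fin 2) (Fin 2) ℝ) *ᵥ v) =
      (Q * (A : Matrix (Fin 2) (Fin 2) ℝ) * P) *ᵥ (Q *ᵥ v) := by
    simp only [Matrix.mulVec_mulVec, Matrix.mul_assoc, hPQ, Matrix.mul_one]
  unfold qf at hq ⊢
  rw [e]
  generalize Q * (A : Matrix (Fin 2) (Fin 2) ℝ) * P = N at *
  generalize Q *ᵥ v = w at *
  simp only [Matrix.mulVec, dotProduct, Fin.sum_univ_two]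
  have hε2 : ε * ε = 1 := by rcases hε with rfl | rfl <;> norm_num
  have p00 := hpos 0 0
  have p01 := hpos 0 1
  have p10 := hpos 1 0
  have p11 := hpos 1 1
  have e2 : (N 0 0 * w 0 + N 0 1 * w 1) * (N 1 0 * w 0 + N 1 1 * w 1) =
      (ε * N 0 0) * (ε * N 1 0) * w 0 ^ 2 + (ε * N 0 1) * (ε * N 1 1) * w 1 ^ 2 +
      ((ε * N 0 0) * (ε * N 1 1) + (ε * N 0 1) * (ε * N 1 0)) * (w 0 * w 1) := by
    linear_combination (-(N 0 0 * w 0 + N 0 1 * w 1) * (N 1 0 * w 0 + N 1 1 * w 1)) * hε2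
  rw [e2]
  have h3 : 0 ≤ ((ε * N 0 0) * (ε * N 1 1) + (ε * N 0 1) * (ε * N 1 0)) * (w 0 * w 1) := by
    positivity
  by_cases h0 : w 0 = 0
  · have h1 : w 1 ≠ 0 := fun h1 => hv' (by ext i; fin_cases i <;> simp [h0, h1])
    have : 0 < (ε * N 0 1) * (ε * N 1 1) * w 1 ^ 2 := by positivity
    have : 0 ≤ (ε * N 0 0) * (ε * N 1 0) * w 0 ^ 2 := by positivity
    linarith
  · have : 0 < (ε * N 0 0) * (ε * N 1 0) * w 0 ^ 2 := by positivity
    have : 0 ≤ (ε * N 0 1) * (ε * N 1 1) * w 1 ^ 2 := by positivity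
    linarith

/-- The interior of the common invariant cone, seen in `ℙ¹`, is the interval required by `H0`. -/
lemma H0_of_posPair {A B : SL2} (h : PosPair A B) : (A, B) ∈ H0 := by
  obtain ⟨P, Q, hQP, hA, hB⟩ := h
  have hPQ : P * Q = 1 := mul_eq_one_comm.1 hQP
  have hchart : ∀ t, chart hQP t ∈ {x : P1 | 0 < qf Q x.rep} ↔ 0 < t * (1 - t) := fun t => by
    rw [Set.mem_ofPred_eq, chart, (quad_qf Q).rep_pos, quad_form_chart hQP]
  have hcl : closure {x : P1 | 0 < qf Q x.rep} ⊆ {x : P1 | 0 ≤ qf Q x.rep} := by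
    refine closure_minimal (fun x (hx : 0 < qf Q x.rep) => hx.le) ?_
    rw [← isOpen_compl_iff]
    convert (quad_qf Q).neg.isOpen using 1
    ext x
    simp
  have hmap : ∀ X : SL2, ConePos P Q X →
      projAct X '' closure {x : P1 | 0 < qf Q x.rep} ⊆ {x : P1 | 0 < qf Q x.rep} := by
    rintro X hX _ ⟨x, hx, rfl⟩
    have hx' := hcl hx
    clear hx
    induction x using Projectivization.ind with
    | h v hv =>
      change 0 ≤ qf Q (pmk v hv).rep at hx'
      change 0 < qf Q (projAct X (pmk v hv)).rep
      obtain ⟨c, hc, e⟩ := (quad_qf Q).rep v hv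
      rw [e] at hx'
      rw [projAct_pmk _ _ _ (mulVec_ne_zero (inv_mul_val X) hv), (quad_qf Q).rep_pos]
      exact hX.maps hQP hv (nonneg_of_mul_nonneg_right hx' hc)
  refine ⟨{x : P1 | 0 < qf Q x.rep}, ⟨(quad_qf Q).isOpen, ?_, chart hQP 0, ?_, chart hQP 1, ?_, ?_⟩,
    hmap A hA, hmap B hB⟩
  · have : {x : P1 | 0 < qf Q x.rep} = chart hQP '' Set.Ioo 0 1 := by
      ext x
      constructor
      · induction x using Projectivization.ind with
        | h v hv =>
          intro hx
          have hq : 0 < qf Q v := ((quad_qf Q).rep_pos v hv).1 hx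
          have hs : (Q *ᵥ v) 0 + (Q *ᵥ v) 1 ≠ 0 := by
            intro h0
            have : (Q *ᵥ v) 1 = - (Q *ᵥ v) 0 := by linarith
            rw [qf, this] at hq
            nlinarith [sq_nonneg ((Q *ᵥ v) 0)]
          refine ⟨_, ?_, (pmk_eq_chart hQP v hv hs).symm⟩
          rw [qf] at hq
          generalize Q *ᵥ v = w at *
          rcases mul_pos_iff.1 hq with ⟨p, q⟩ | ⟨p, q⟩
          · exact ⟨by positivity, (div_lt_one (by linarith)).2 (by linarith)⟩
          · exact ⟨div_pos_of_neg_of_neg p (by linarith),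
              (div_lt_one_of_neg (by linarith)).2 (by linarith)⟩
      · rintro ⟨t, ht, rfl⟩
        exact (hchart t).2 (mul_pos ht.1 (by linarith [ht.2]))
    rw [this]
    exact (isConnected_Ioo (by norm_num)).image _ (continuous_chart hQP).continuousOn
  · intro hx; have := (hchart 0).1 hx; norm_num at this
  · intro hx; have := (hchart 1).1 hx; norm_num at this
  · intro hx
    rw [chart, chart, Projectivization.mk_eq_mk_iff'] at hx
    obtain ⟨c, hc⟩ := hx
    have := congrArg (Q *ᵥ ·) hc
    simp only [Matrix.mulVec_smul, inv_mulVec hQP] at this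
    have := congrFun this 1
    norm_num at this

lemma H0_invariant {p : SL2 × SL2} (h : p ∈ H0) (s : List Bool) : applySeq s p ∈ H0 := by
  induction s generalizing p with
  | nil => exact h
  | cons e s ih =>
    refine ih ?_
    have hcomp : ∀ (X Y : SL2) (x : P1), projAct (X * Y) x = projAct X (projAct Y x) := by
      intro X Y x
      induction x using Projectivization.ind with
      | h v hv =>
        have h1 := mulVec_ne_zero (inv_mul_val Y) hv
        have h2 := mulVec_ne_zero (inv_mul_val X) h1
        have h3 := mulVec_ne_zero (inv_mul_val (X * Y)) hv
        change projAct (X * Y) (pmk v hv) = projAct X (projAct Y (pmk v hv))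
        rw [projAct_pmk _ _ _ h1, projAct_pmk _ _ _ h2, projAct_pmk _ _ _ h3]
        refine pmk_eq_of_smul _ _ 1 ?_
        rw [one_smul, Matrix.mulVec_mulVec, Matrix.SpecialLinearGroup.coe_mul]
    obtain ⟨I, hI, hA, hB⟩ := h
    have hc : ∀ X Y : SL2, projAct X '' closure I ⊆ I → projAct Y '' closure I ⊆ I →
        projAct (X * Y) '' closure I ⊆ I := by
      rintro X Y hX hY _ ⟨x, hx, rfl⟩
      rw [hcomp]
      exact hX ⟨_, subset_closure (hY ⟨_, hx, rfl⟩), rfl⟩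
    cases e
    · exact ⟨I, hI, hc _ _ hB hA, hB⟩
    · exact ⟨I, hI, hA, hc _ _ hA hB⟩

/-- Positive matrices have positive traces, so the product of traces of a pair preserving a cone
is positive. -/
lemma not_Hid_of_posPair {A B : SL2} (h : PosPair A B) : (A, B) ∉ Hid := by
  rintro ⟨-, -, -, hneg⟩
  obtain ⟨P, Q, hQP, ⟨ε, hε, hA⟩, ⟨δ, hδ, hB⟩⟩ := h
  have hPQ : P * Q = 1 := mul_eq_one_comm.1 hQP
  have htr : ∀ M : Matrix (Fin 2) (Fin 2) ℝ, (Q * M * P).trace = M.trace := fun M => by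
    rw [Matrix.trace_mul_comm, ← Matrix.mul_assoc, hPQ, Matrix.one_mul]
  have hm : Q * ((A * B : SL2) : Matrix (Fin 2) (Fin 2) ℝ) * P =
      (Q * (A : Matrix (Fin 2) (Fin 2) ℝ) * P) * (Q * (B : Matrix (Fin 2) (Fin 2) ℝ) * P) := by
    simp only [Matrix.SpecialLinearGroup.coe_mul, Matrix.mul_assoc]
    rw [← Matrix.mul_assoc P Q, hPQ, Matrix.one_mul]
  simp only [trace2] at hneg
  rw [← htr A, ← htr B, ← htr (A * B : SL2), hm] at hneg
  generalize Q * (A : Matrix (Fin 2) (Fin 2) ℝ) * P = M at *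
  generalize Q * (B : Matrix (Fin 2) (Fin 2) ℝ) * P = N at *
  simp only [Matrix.trace_fin_two, Matrix.mul_apply, Fin.sum_univ_two] at hneg
  have a00 := hA 0 0
  have a01 := hA 0 1
  have a10 := hA 1 0
  have a11 := hA 1 1
  have b00 := hB 0 0
  have b01 := hB 0 1
  have b10 := hB 1 0
  have b11 := hB 1 1
  have h1 : 0 < (ε * M 0 0 + ε * M 1 1) * (δ * N 0 0 + δ * N 1 1) *
      ((ε * M 0 0) * (δ * N 0 0) + (ε * M 0 1) * (δ * N 1 0) +
        ((ε * M 1 0) * (δ * N 0 1) + (ε * M 1 1) * (δ * N 1 1))) := by positivity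
  have hεδ : (ε * δ) ^ 2 = 1 := by rcases hε with rfl | rfl <;> rcases hδ with rfl | rfl <;> norm_num
  have h2 : (ε * M 0 0 + ε * M 1 1) * (δ * N 0 0 + δ * N 1 1) *
      ((ε * M 0 0) * (δ * N 0 0) + (ε * M 0 1) * (δ * N 1 0) +
        ((ε * M 1 0) * (δ * N 0 1) + (ε * M 1 1) * (δ * N 1 1))) =
      (ε * δ) ^ 2 * ((M 0 0 + M 1 1) * (N 0 0 + N 1 1) *
      (M 0 0 * N 0 0 + M 0 1 * N 1 0 + (M 1 0 * N 0 1 + M 1 1 * N 1 1))) := by ring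
  rw [h2, hεδ, one_mul] at h1
  linarith

lemma pairProd_snoc (A B : SL2) (w : List Bool) (b : Bool) :
    pairProd A B (w ++ [b]) = (if b then A else B) * pairProd A B w := by
  rw [pairProd_append]; simp [pairProd]

/-- A positive matrix of determinant one multiplies the product of the coordinates by a factor
bounded below by some `κ > 1`. -/
lemma ConePos.expand {P Q : Matrix (Fin 2) (Fin 2) ℝ} (h : Q * P = 1) {A : SL2}
    (hA : ConePos P Q A) : ∃ κ > (1:ℝ), ∃ ε : ℝ, ε ^ 2 = 1 ∧ ∀ v : Fin 2 → ℝ, 0 < v 0 → 0 < v 1 →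
      0 < ε * ((Q * (A : Matrix (Fin 2) (Fin 2) ℝ) * P) *ᵥ v) 0 ∧
      0 < ε * ((Q * (A : Matrix (Fin 2) (Fin 2) ℝ) * P) *ᵥ v) 1 ∧
      κ * (v 0 * v 1) ≤ (ε * ((Q * (A : Matrix (Fin 2) (Fin 2) ℝ) * P) *ᵥ v) 0) *
        (ε * ((Q * (A : Matrix (Fin 2) (Fin 2) ℝ) * P) *ᵥ v) 1) := by
  obtain ⟨ε, hε, hpos⟩ := hA
  have hdet : (Q * (A : Matrix (Fin 2) (Fin 2) ℝ) * P).det = 1 := by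
    rw [Matrix.det_mul, Matrix.det_mul, A.det_coe, mul_one, ← Matrix.det_mul, h, Matrix.det_one]
  generalize Q * (A : Matrix (Fin 2) (Fin 2) ℝ) * P = N at *
  rw [Matrix.det_fin_two] at hdet
  have hε2 : ε ^ 2 = 1 := by rcases hε with rfl | rfl <;> norm_num
  have p00 := hpos 0 0
  have p01 := hpos 0 1
  have p10 := hpos 1 0
  have p11 := hpos 1 1
  refine ⟨1 + 2 * ((ε * N 0 1) * (ε * N 1 0)), by have := mul_pos p01 p10; linarith, ε, hε2,
    fun v h0 h1 => ?_⟩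
  simp only [Matrix.mulVec, dotProduct, Fin.sum_univ_two]
  have e0 : ε * (N 0 0 * v 0 + N 0 1 * v 1) = ε * N 0 0 * v 0 + ε * N 0 1 * v 1 := by ring
  have e1 : ε * (N 1 0 * v 0 + N 1 1 * v 1) = ε * N 1 0 * v 0 + ε * N 1 1 * v 1 := by ring
  have hd : (ε * N 0 0) * (ε * N 1 1) - (ε * N 0 1) * (ε * N 1 0) = 1 := by
    linear_combination hdet * ε ^ 2 + hε2
  rw [e0, e1]
  refine ⟨by positivity, by positivity, ?_⟩
  generalize ε * N 0 0 = a at *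
  generalize ε * N 0 1 = b at *
  generalize ε * N 1 0 = c at *
  generalize ε * N 1 1 = d at *
  have e : (a * v 0 + b * v 1) * (c * v 0 + d * v 1) =
      (1 + 2 * (b * c)) * (v 0 * v 1) + a * c * v 0 ^ 2 + b * d * v 1 ^ 2 := by
    linear_combination (v 0 * v 1) * hd
  rw [e]
  have : 0 ≤ a * c * v 0 ^ 2 := by positivity
  have : 0 ≤ b * d * v 1 ^ 2 := by positivity
  linarith

/-- Along a word, the image of the vector `P (1, 1)` stays in the cone, up to sign, and the product
of its two coordinates grows exponentially. -/
lemma unifHyp_of_posPair {A B : SL2} (h : PosPair A B) : UnifHypPair A B := by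
  obtain ⟨P, Q, hQP, hA, hB⟩ := h
  have hPQ : P * Q = 1 := mul_eq_one_comm.1 hQP
  obtain ⟨κ, hκ, hX⟩ : ∃ κ > (1:ℝ), ∀ b : Bool, ∃ ε : ℝ, ε ^ 2 = 1 ∧ ∀ v : Fin 2 → ℝ,
      0 < v 0 → 0 < v 1 →
      0 < ε * ((Q * ((if b then A else B : SL2) : Matrix (Fin 2) (Fin 2) ℝ) * P) *ᵥ v) 0 ∧
      0 < ε * ((Q * ((if b then A else B : SL2) : Matrix (Fin 2) (Fin 2) ℝ) * P) *ᵥ v) 1 ∧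
      κ * (v 0 * v 1) ≤
        (ε * ((Q * ((if b then A else B : SL2) : Matrix (Fin 2) (Fin 2) ℝ) * P) *ᵥ v) 0) *
        (ε * ((Q * ((if b then A else B : SL2) : Matrix (Fin 2) (Fin 2) ℝ) * P) *ᵥ v) 1) := by
    obtain ⟨κ, hκ, ε, hε, hv⟩ := hA.expand hQP
    obtain ⟨κ', hκ', ε', hε', hv'⟩ := hB.expand hQP
    refine ⟨min κ κ', lt_min hκ hκ', fun b => ?_⟩
    cases b
    · refine ⟨ε', hε', fun v h0 h1 => ⟨(hv' v h0 h1).1, (hv' v h0 h1).2.1, ?_⟩⟩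
      exact (mul_le_mul_of_nonneg_right (min_le_right _ _) (by positivity)).trans
        (hv' v h0 h1).2.2
    · refine ⟨ε, hε, fun v h0 h1 => ⟨(hv v h0 h1).1, (hv v h0 h1).2.1, ?_⟩⟩
      exact (mul_le_mul_of_nonneg_right (min_le_left _ _) (by positivity)).trans
        (hv v h0 h1).2.2
  have key : ∀ w : List Bool, ∃ ε : ℝ, ε ^ 2 = 1 ∧
      0 < ε * ((Q * (pairProd A B w : Matrix (Fin 2) (Fin 2) ℝ) * P) *ᵥ ![1, 1]) 0 ∧
      0 < ε * ((Q * (pairProd A B w : Matrix (Fin 2) (Fin 2) ℝ) * P) *ᵥ ![1, 1]) 1 ∧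
      κ ^ w.length ≤
        (ε * ((Q * (pairProd A B w : Matrix (Fin 2) (Fin 2) ℝ) * P) *ᵥ ![1, 1]) 0) *
        (ε * ((Q * (pairProd A B w : Matrix (Fin 2) (Fin 2) ℝ) * P) *ᵥ ![1, 1]) 1) := by
    intro w
    induction w using List.reverseRecOn with
    | nil =>
      refine ⟨1, by norm_num, ?_⟩
      simp [pairProd, hQP, Matrix.SpecialLinearGroup.coe_one]
    | append_singleton w b ih =>
      obtain ⟨ε, hε, h0, h1, h2⟩ := ih
      obtain ⟨δ, hδ, hv⟩ := hX b
      rw [pairProd_snoc]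
      generalize (if b then A else B : SL2) = X at *
      have e : Q * ((X * pairProd A B w : SL2) : Matrix (Fin 2) (Fin 2) ℝ) * P =
          (Q * (X : Matrix (Fin 2) (Fin 2) ℝ) * P) *
            (Q * (pairProd A B w : Matrix (Fin 2) (Fin 2) ℝ) * P) := by
        simp only [Matrix.SpecialLinearGroup.coe_mul, Matrix.mul_assoc]
        rw [← Matrix.mul_assoc P Q, hPQ, Matrix.one_mul]
      rw [e, ← Matrix.mulVec_mulVec]
      generalize (Q * (pairProd A B w : Matrix (Fin 2) (Fin 2) ℝ) * P) *ᵥ ![1, 1] = u at *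
      obtain ⟨k0, k1, k2⟩ := hv (ε • u) (by simpa using h0) (by simpa using h1)
      rw [Matrix.mulVec_smul] at k0 k1 k2
      generalize (Q * (X : Matrix (Fin 2) (Fin 2) ℝ) * P) *ᵥ u = z at *
      simp only [Pi.smul_apply, smul_eq_mul, ← mul_assoc δ ε] at k0 k1 k2
      refine ⟨δ * ε, by rw [mul_pow, hδ, hε, one_mul], k0, k1, ?_⟩
      refine le_trans ?_ k2
      rw [List.length_append, List.length_singleton, pow_succ']
      exact mul_le_mul_of_nonneg_left h2 (by linarith)
  have hQPpos : 0 < eNorm Q * eNorm P := by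
    have := eNorm_mul_le Q P
    rw [hQP] at this
    have h2 : eNorm (1 : Matrix (Fin 2) (Fin 2) ℝ) = 2 := by
      norm_num [eNorm, Fin.sum_univ_two]
    linarith
  refine unifHyp_of_eNorm (C := 4 / (eNorm Q * eNorm P) ^ 2) (by positivity) hκ fun w => ?_
  obtain ⟨ε, hε, h0, h1, h2⟩ := key w
  have hle : eNorm (Q * (pairProd A B w : Matrix (Fin 2) (Fin 2) ℝ) * P) ≤
      eNorm (pairProd A B w : Matrix (Fin 2) (Fin 2) ℝ) * (eNorm Q * eNorm P) := by
    refine (eNorm_mul_le _ _).trans ?_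
    have := mul_le_mul_of_nonneg_right
      (eNorm_mul_le Q (pairProd A B w : Matrix (Fin 2) (Fin 2) ℝ)) (eNorm_nonneg P)
    linarith
  generalize eNorm (pairProd A B w : Matrix (Fin 2) (Fin 2) ℝ) = m at *
  generalize Q * (pairProd A B w : Matrix (Fin 2) (Fin 2) ℝ) * P = N at *
  simp only [Matrix.mulVec, dotProduct, Fin.sum_univ_two, Matrix.cons_val_zero,
    Matrix.cons_val_one, Matrix.cons_val_fin_one, mul_one] at h0 h1 h2
  have habs : ε * (N 0 0 + N 0 1) + ε * (N 1 0 + N 1 1) ≤ eNorm N := by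
    have hε1 : ε = 1 ∨ ε = -1 := mul_self_eq_one_iff.1 (by rw [← sq]; exact hε)
    simp only [eNorm]
    have := le_abs_self (N 0 0)
    have := le_abs_self (N 0 1)
    have := le_abs_self (N 1 0)
    have := le_abs_self (N 1 1)
    have := neg_abs_le (N 0 0)
    have := neg_abs_le (N 0 1)
    have := neg_abs_le (N 1 0)
    have := neg_abs_le (N 1 1)
    rcases hε1 with rfl | rfl <;> linarith
  rw [div_mul_eq_mul_div, div_le_iff₀ (by positivity), ← mul_pow]
  have hsum := habs.trans hle
  generalize ε * (N 0 0 + N 0 1) = s at *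
  generalize ε * (N 1 0 + N 1 1) = t at *
  have h3 : (s + t) ^ 2 ≤ (m * (eNorm Q * eNorm P)) ^ 2 :=
    pow_le_pow_left₀ (by linarith) hsum 2
  nlinarith [sq_nonneg (s - t)]

/-! ### Existence of an invariant cone -/

/-- The spectral decomposition of a hyperbolic matrix: a multiple of the identity plus a multiple
of a projection of rank one. -/
lemma exists_rank_one (M : Matrix (Fin 2) (Fin 2) ℝ) (hdet : M.det = 1) {a : ℝ} (ha : 1 < a)
    (htr : M.trace = a + a⁻¹) : ∃ u l : Fin 2 → ℝ, l 0 * u 0 + l 1 * u 1 = 1 ∧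
      M = a⁻¹ • (1 : Matrix (Fin 2) (Fin 2) ℝ) + (a - a⁻¹) • Matrix.of fun i j => u i * l j := by
  have hk : 0 < a - a⁻¹ := by
    have : a⁻¹ < 1 := inv_lt_one_of_one_lt₀ ha
    linarith
  have ha0 : a ≠ 0 := by linarith
  rw [Matrix.det_fin_two] at hdet
  rw [Matrix.trace_fin_two] at htr
  obtain ⟨R, hR⟩ : ∃ R : Matrix (Fin 2) (Fin 2) ℝ,
      M = a⁻¹ • (1 : Matrix (Fin 2) (Fin 2) ℝ) + (a - a⁻¹) • R :=
    ⟨(a - a⁻¹)⁻¹ • (M - a⁻¹ • 1), by rw [smul_smul, mul_inv_cancel₀ hk.ne', one_smul]; abel⟩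
  have h00 : M 0 0 = a⁻¹ + (a - a⁻¹) * R 0 0 := by rw [hR]; simp
  have h01 : M 0 1 = (a - a⁻¹) * R 0 1 := by rw [hR]; simp
  have h10 : M 1 0 = (a - a⁻¹) * R 1 0 := by rw [hR]; simp
  have h11 : M 1 1 = a⁻¹ + (a - a⁻¹) * R 1 1 := by rw [hR]; simp
  rw [h00, h11] at htr
  rw [h00, h01, h10, h11] at hdet
  have hi : a * a⁻¹ = 1 := mul_inv_cancel₀ ha0
  generalize a⁻¹ = b at *
  have t1 : R 0 0 + R 1 1 = 1 := by
    apply mul_left_cancel₀ hk.ne'; linarith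
  have t2 : R 0 0 * R 1 1 = R 0 1 * R 1 0 := by
    apply mul_left_cancel₀ (pow_pos hk 2).ne'
    linear_combination hdet - hi - b * (a - b) * t1
  suffices h : ∃ u l : Fin 2 → ℝ, l 0 * u 0 + l 1 * u 1 = 1 ∧ R = Matrix.of fun i j => u i * l j by
    obtain ⟨u, l, h1, h2⟩ := h
    exact ⟨u, l, h1, by rw [hR, h2]⟩
  by_cases h0 : R 0 0 = 0
  · have h1 : R 1 1 = 1 := by linarith
    rw [h0, zero_mul] at t2
    refine ⟨![R 0 1, 1], ![R 1 0, 1], ?_, ?_⟩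
    · change R 1 0 * R 0 1 + 1 * 1 = 1
      linear_combination -t2
    · ext i j; fin_cases i <;> fin_cases j <;> simp [h0, h1, ← t2]
  · refine ⟨![1, R 1 0 / R 0 0], ![R 0 0, R 0 1], ?_, ?_⟩
    · change R 0 0 * 1 + R 0 1 * (R 1 0 / R 0 0) = 1
      field_simp
      linear_combination R 0 0 * t1 - t2
    · ext i j; fin_cases i <;> fin_cases j <;> simp
      · field_simp
      · field_simp; linarith

/-- A cone containing `u` and `u'` in its interior, on which `l` and `l'` are positive. -/
lemma exists_cone (u u' l l' : Fin 2 → ℝ) (h1 : l 0 * u 0 + l 1 * u 1 = 1)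
    (h2 : l' 0 * u' 0 + l' 1 * u' 1 = 1) (h3 : 0 < l 0 * u' 0 + l 1 * u' 1)
    (h4 : 0 < l' 0 * u 0 + l' 1 * u 1) :
    ∃ P Q : Matrix (Fin 2) (Fin 2) ℝ, Q * P = 1 ∧
      (∀ i, 0 < (Q *ᵥ u) i) ∧ (∀ i, 0 < (Q *ᵥ u') i) ∧
      (∀ j, 0 < (l ᵥ* P) j) ∧ (∀ j, 0 < (l' ᵥ* P) j) := by
  by_cases hD : u 0 * u' 1 - u 1 * u' 0 = 0
  ·
    -- `u'` is a positive multiple of `u`; take a thin symmetric cone around `u`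
    have e0 : u' 0 = (l 0 * u' 0 + l 1 * u' 1) * u 0 := by
      linear_combination (-u' 0) * h1 - l 1 * hD
    have e1 : u' 1 = (l 0 * u' 0 + l 1 * u' 1) * u 1 := by
      linear_combination (-u' 1) * h1 + l 0 * hD
    generalize l 0 * u' 0 + l 1 * u' 1 = t at *
    generalize hk' : l' 0 * u 0 + l' 1 * u 1 = k' at *
    have hn : 0 < u 0 ^ 2 + u 1 ^ 2 := by
      rcases eq_or_ne (u 0) 0 with h | h
      · have : u 1 ≠ 0 := fun h' => by rw [h, h'] at h1; simp at h1
        positivity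
      · positivity
    obtain ⟨η, hη, hη1, hη2⟩ : ∃ η > (0:ℝ), η * |l 1 * u 0 - l 0 * u 1| < 1 ∧
        η * |l' 1 * u 0 - l' 0 * u 1| < k' := by
      generalize |l 1 * u 0 - l 0 * u 1| = x, abs_nonneg (l 1 * u 0 - l 0 * u 1) = hx
      generalize |l' 1 * u 0 - l' 0 * u 1| = y, abs_nonneg (l' 1 * u 0 - l' 0 * u 1) = hy
      refine ⟨1 / (1 + x + y / k'), by positivity, ?_, ?_⟩
      · rw [one_div, inv_mul_eq_div, div_lt_one (by positivity)]
        have : 0 ≤ y / k' := by positivity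
        linarith
      · rw [one_div, inv_mul_eq_div, div_lt_iff₀ (by positivity)]
        have : k' * (1 + x + y / k') = k' + k' * x + y := by field_simp
        rw [this]
        have : 0 ≤ k' * x := by positivity
        linarith
    have hη1' : |η * (l 1 * u 0 - l 0 * u 1)| < 1 := by rwa [abs_mul, abs_of_pos hη]
    have hη2' : |η * (l' 1 * u 0 - l' 0 * u 1)| < k' := by rwa [abs_mul, abs_of_pos hη]
    obtain ⟨b1, b2⟩ := abs_lt.1 hη1'
    obtain ⟨b3, b4⟩ := abs_lt.1 hη2'
    obtain ⟨d, hd0, hd⟩ : ∃ d > (0:ℝ), d * (2 * η * (u 0 ^ 2 + u 1 ^ 2)) = 1 :=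
      ⟨(2 * η * (u 0 ^ 2 + u 1 ^ 2))⁻¹, by positivity, inv_mul_cancel₀ (by positivity)⟩
    have g1 : 0 < d * (η * (u 0 ^ 2 + u 1 ^ 2)) := by positivity
    have g2 : 0 < d * (t * (η * (u 0 ^ 2 + u 1 ^ 2))) := by positivity
    refine ⟨!![u 0 - η * u 1, u 0 + η * u 1; u 1 + η * u 0, u 1 - η * u 0],
      d • !![η * u 0 - u 1, η * u 1 + u 0; η * u 0 + u 1, η * u 1 - u 0], ?_, ?_, ?_, ?_, ?_⟩
    · ext i j; fin_cases i <;> fin_cases j <;>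
        simp [Matrix.mul_apply, Fin.sum_univ_two] <;> first | linear_combination hd | ring1
    · intro i; fin_cases i <;> simp [Matrix.mulVec, dotProduct, Fin.sum_univ_two] <;> linarith
    · intro i; fin_cases i <;> simp [Matrix.mulVec, dotProduct, Fin.sum_univ_two, e0, e1] <;>
        linarith
    · intro j; fin_cases j <;> simp [Matrix.vecMul, dotProduct, Fin.sum_univ_two] <;> linarith
    · intro j; fin_cases j <;> simp [Matrix.vecMul, dotProduct, Fin.sum_univ_two] <;> linarith
  ·
    -- take the cone spanned by `u` and `u'`, slightly enlarged
    generalize hk : l 0 * u' 0 + l 1 * u' 1 = k at *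
    generalize hk' : l' 0 * u 0 + l' 1 * u 1 = k' at *
    obtain ⟨η, hη, hη1, a1, a2, a3, a4⟩ : ∃ η > (0:ℝ), η < 1 ∧ η * k < 1 ∧ η < k ∧
        η * k' < 1 ∧ η < k' := by
      have p1 : 0 < 1 / k := by positivity
      have p2 : 0 < 1 / k' := by positivity
      have hS : 0 < 2 + k + k' + 1 / k + 1 / k' := by positivity
      refine ⟨1 / (2 + k + k' + 1 / k + 1 / k'), by positivity, ?_, ?_, ?_, ?_, ?_⟩
      · rw [div_lt_one hS]; linarith
      · rw [one_div, inv_mul_eq_div, div_lt_one hS]; linarith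
      · rw [one_div_lt hS h3]; linarith
      · rw [one_div, inv_mul_eq_div, div_lt_one hS]; linarith
      · rw [one_div_lt hS h4]; linarith
    have hη2 : 0 < 1 - η ^ 2 := by nlinarith
    obtain ⟨d, hd⟩ : ∃ d : ℝ, d * ((1 - η ^ 2) * (u 0 * u' 1 - u 1 * u' 0)) = 1 :=
      ⟨_, inv_mul_cancel₀ (mul_ne_zero hη2.ne' hD)⟩
    have hdD : 0 < d * (u 0 * u' 1 - u 1 * u' 0) := by
      refine (mul_pos_iff_of_pos_left hη2).1 ?_
      linarith
    have hdη := mul_pos hdD hη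
    rw [← hk] at a1 a2
    rw [← hk'] at a3 a4
    have m1 : η * (l 0 * u 0 + l 1 * u 1) = η := by rw [h1, mul_one]
    have m2 : η * (l' 0 * u' 0 + l' 1 * u' 1) = η := by rw [h2, mul_one]
    refine ⟨!![u 0 - η * u' 0, u' 0 - η * u 0; u 1 - η * u' 1, u' 1 - η * u 1],
      d • !![u' 1 - η * u 1, -(u' 0 - η * u 0); -(u 1 - η * u' 1), u 0 - η * u' 0],
      ?_, ?_, ?_, ?_, ?_⟩
    · ext i j; fin_cases i <;> fin_cases j <;>
        simp [Matrix.mul_apply, Fin.sum_univ_two] <;> first | linear_combination hd | ring1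
    · intro i; fin_cases i <;> simp [Matrix.mulVec, dotProduct, Fin.sum_univ_two] <;> linarith
    · intro i; fin_cases i <;> simp [Matrix.mulVec, dotProduct, Fin.sum_univ_two] <;> linarith
    · intro j; fin_cases j <;> simp [Matrix.vecMul, dotProduct, Fin.sum_univ_two] <;> linarith
    · intro j; fin_cases j <;> simp [Matrix.vecMul, dotProduct, Fin.sum_univ_two] <;> linarith

/-- The solution `a > 1` of `a + 1/a = X`. -/
lemma exists_add_inv {X : ℝ} (hX : 2 < X) : ∃ a : ℝ, 1 < a ∧ X = a + a⁻¹ := by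
  have h : 0 < X ^ 2 - 4 := by nlinarith
  have hs := Real.sq_sqrt h.le
  have hp := Real.sqrt_nonneg (X ^ 2 - 4)
  refine ⟨(X + √(X ^ 2 - 4)) / 2, by linarith, ?_⟩
  have : X + √(X ^ 2 - 4) ≠ 0 := by linarith
  field_simp
  nlinarith

/-- A sign times a matrix of the form `a + k u lᵀ` is positive in a basis adapted to `u`, `l`. -/
lemma conePos_of_rank_one {A : SL2} {ε a k : ℝ} (hε : ε = 1 ∨ ε = -1) (ha : 0 < a) (hk : 0 < k)
    {u l : Fin 2 → ℝ}
    (hM : ε • (A : Matrix (Fin 2) (Fin 2) ℝ) =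
      a • (1 : Matrix (Fin 2) (Fin 2) ℝ) + k • Matrix.of fun i j => u i * l j)
    {P Q : Matrix (Fin 2) (Fin 2) ℝ} (h : Q * P = 1)
    (hp : ∀ i j, 0 < (Q *ᵥ u) i * (l ᵥ* P) j) : ConePos P Q A := by
  refine ⟨ε, hε, fun i j => ?_⟩
  have e : ε • (Q * (A : Matrix (Fin 2) (Fin 2) ℝ) * P) =
      a • (1 : Matrix (Fin 2) (Fin 2) ℝ) + k • Matrix.of fun i j => (Q *ᵥ u) i * (l ᵥ* P) j := by
    have h1 : (Matrix.of fun i j => u i * l j) = Matrix.vecMulVec u l := rfl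
    have h2 : (Matrix.of fun i j => (Q *ᵥ u) i * (l ᵥ* P) j) =
      Matrix.vecMulVec (Q *ᵥ u) (l ᵥ* P) := rfl
    rw [← Matrix.smul_mul, ← Matrix.mul_smul, hM, h1, h2, Matrix.mul_add, Matrix.add_mul,
      Matrix.mul_smul, Matrix.smul_mul, Matrix.mul_one, h, Matrix.mul_smul, Matrix.smul_mul,
      Matrix.mul_vecMulVec, Matrix.vecMulVec_mul]
  have e' := congrFun (congrFun e i) j
  simp only [Matrix.smul_apply, Matrix.add_apply, smul_eq_mul, Matrix.of_apply] at e'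
  rw [e']
  have h1 : 0 ≤ (1 : Matrix (Fin 2) (Fin 2) ℝ) i j := by
    rw [Matrix.one_apply]; split_ifs <;> norm_num
  have := mul_pos hk (hp i j)
  have := mul_nonneg ha.le h1
  linarith

/-- If `A`, `B`, `AB` are hyperbolic with positive product of traces, and the triple of traces is
not one of those to which the descent applies, then the pair preserves a cone. With
`εA = a⁻¹ + (a - a⁻¹) u lᵀ` and `δB = b⁻¹ + (b - b⁻¹) u' l'ᵀ` the hypothesis amounts to
`l(u') l'(u) > 0`, so that `exists_cone` applies. -/
lemma posPair_of_not_weakLink {A B : SL2} (hx : 2 < |trace2 A|) (hy : 2 < |trace2 B|)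
    (hxyz : 0 < trace2 A * trace2 B * trace2 (A * B)) (hz : 2 < |trace2 (A * B)|)
    (hw : trT (A, B) ∉ WeakLinkTr) : PosPair A B := by
  obtain ⟨ε, hε, hεx⟩ : ∃ ε : ℝ, (ε = 1 ∨ ε = -1) ∧ ε * trace2 A = |trace2 A| := by
    rcases abs_choice (trace2 A) with h | h <;> rw [h]
    · exact ⟨1, Or.inl rfl, one_mul _⟩
    · exact ⟨-1, Or.inr rfl, by ring⟩
  obtain ⟨δ, hδ, hδy⟩ : ∃ ε : ℝ, (ε = 1 ∨ ε = -1) ∧ ε * trace2 B = |trace2 B| := by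
    rcases abs_choice (trace2 B) with h | h <;> rw [h]
    · exact ⟨1, Or.inl rfl, one_mul _⟩
    · exact ⟨-1, Or.inr rfl, by ring⟩
  have hε2 : ε ^ 2 = 1 := by rcases hε with rfl | rfl <;> norm_num
  have hδ2 : δ ^ 2 = 1 := by rcases hδ with rfl | rfl <;> norm_num
  have hdet : ∀ (t : ℝ) (M : SL2), t ^ 2 = 1 → (t • (M : Matrix (Fin 2) (Fin 2) ℝ)).det = 1 := by
    intro t M ht
    rw [Matrix.det_smul, M.det_coe, Fintype.card_fin, ht, one_mul]
  obtain ⟨a, ha, hXa⟩ := exists_add_inv hx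
  obtain ⟨b, hb, hYb⟩ := exists_add_inv hy
  obtain ⟨u, l, h1, hA⟩ := exists_rank_one _ (hdet ε A hε2) ha
    (by rw [Matrix.trace_smul, smul_eq_mul, ← hXa]; exact hεx)
  obtain ⟨u', l', h2, hB⟩ := exists_rank_one _ (hdet δ B hδ2) hb
    (by rw [Matrix.trace_smul, smul_eq_mul, ← hYb]; exact hδy)
  have ha1 : a⁻¹ < 1 := inv_lt_one_of_one_lt₀ ha
  have hb1 : b⁻¹ < 1 := inv_lt_one_of_one_lt₀ hb
  have ha0 : 0 < a⁻¹ := by positivity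
  have hb0 : 0 < b⁻¹ := by positivity
  have hai : a * a⁻¹ = 1 := mul_inv_cancel₀ (by linarith)
  have hbi : b * b⁻¹ = 1 := mul_inv_cancel₀ (by linarith)
  have hka : 0 < a - a⁻¹ := by linarith
  have hkb : 0 < b - b⁻¹ := by linarith
  -- `|tr AB| = εδ tr AB`
  have hZ : ε * δ * trace2 (A * B) = |trace2 (A * B)| := by
    have : 0 < ε * δ * trace2 (A * B) := by
      have h5 : 0 < |trace2 A| * |trace2 B| := by positivity
      have h6 : 0 < |trace2 A| * |trace2 B| * (ε * δ * trace2 (A * B)) := by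
        rw [← hεx, ← hδy]
        have : ε * trace2 A * (δ * trace2 B) * (ε * δ * trace2 (A * B)) =
          ε ^ 2 * δ ^ 2 * (trace2 A * trace2 B * trace2 (A * B)) := by ring
        rw [this, hε2, hδ2]; linarith
      exact (mul_pos_iff_of_pos_left h5).1 h6
    rw [← abs_of_pos this, abs_mul, abs_mul]
    have : |ε| = 1 := by rcases hε with rfl | rfl <;> norm_num
    have : |δ| = 1 := by rcases hδ with rfl | rfl <;> norm_num
    simp [*]
  have hZc : |trace2 (A * B)| = a * b⁻¹ + a⁻¹ * b + (a - a⁻¹) * (b - b⁻¹) *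
      ((l 0 * u' 0 + l 1 * u' 1) * (l' 0 * u 0 + l' 1 * u 1)) := by
    have e : ε * δ * trace2 (A * B) = ((ε • (A : Matrix (Fin 2) (Fin 2) ℝ)) *
        (δ • (B : Matrix (Fin 2) (Fin 2) ℝ))).trace := by
      rw [Matrix.smul_mul, Matrix.mul_smul, Matrix.trace_smul, Matrix.trace_smul, trace2,
        Matrix.SpecialLinearGroup.coe_mul]
      simp only [smul_eq_mul]; ring
    rw [← hZ, e, hA, hB]
    simp [Matrix.trace_fin_two, Matrix.mul_apply, Fin.sum_univ_two]
    generalize a⁻¹ = a' at *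
    generalize b⁻¹ = b' at *
    linear_combination (a - a') * b' * h1 + (b - b') * a' * h2
  have hc : 0 < (l 0 * u' 0 + l 1 * u' 1) * (l' 0 * u 0 + l' 1 * u 1) := by
    have hkk := mul_pos hka hkb
    suffices h : a * b⁻¹ + a⁻¹ * b < |trace2 (A * B)| by
      rw [hZc] at h
      exact (mul_pos_iff_of_pos_left hkk).1 (by linarith)
    by_contra hle
    rw [not_lt] at hle
    apply hw
    have hprod : |trace2 A| * |trace2 B| * |trace2 (A * B)| =
        trace2 A * trace2 B * trace2 (A * B) := by
      rw [← abs_mul, ← abs_mul, abs_of_pos hxyz]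
    refine ⟨hx, hy, hz, hxyz, ?_, ?_⟩
    · change 4 ≤ trace2 A ^ 2 + trace2 B ^ 2 + trace2 (A * B) ^ 2 -
        trace2 A * trace2 B * trace2 (A * B)
      rw [← hprod, ← sq_abs (trace2 A), ← sq_abs (trace2 B), ← sq_abs (trace2 (A * B))]
      generalize |trace2 (A * B)| = Z at *
      rw [hXa, hYb]
      generalize a⁻¹ = a' at *
      generalize b⁻¹ = b' at *
      have e : (a + a') ^ 2 + (b + b') ^ 2 + Z ^ 2 - (a + a') * (b + b') * Z =
          4 + (Z - (a * b + a' * b')) * (Z - (a * b' + a' * b)) := by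
        linear_combination (2 - b ^ 2 - b' ^ 2) * hai + (2 - (a ^ 2 + a' ^ 2)) * hbi
      rw [e]
      nlinarith
    · change 2 * |trace2 (A * B)| < |trace2 A| * |trace2 B|
      rw [hXa, hYb]
      nlinarith
  -- replacing `(u', l')` by `(-u', -l')` one may assume both pairings are positive
  have hmain : ∃ P Q : Matrix (Fin 2) (Fin 2) ℝ, Q * P = 1 ∧
      (∀ i j, 0 < (Q *ᵥ u) i * (l ᵥ* P) j) ∧ (∀ i j, 0 < (Q *ᵥ u') i * (l' ᵥ* P) j) := by
    rcases mul_pos_iff.1 hc with ⟨h3, h4⟩ | ⟨h3, h4⟩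
    · obtain ⟨P, Q, h, q1, q2, q3, q4⟩ := exists_cone u u' l l' h1 h2 h3 h4
      exact ⟨P, Q, h, fun i j => mul_pos (q1 i) (q3 j), fun i j => mul_pos (q2 i) (q4 j)⟩
    · obtain ⟨P, Q, h, q1, q2, q3, q4⟩ := exists_cone u (-u') l (-l') h1
        (by simpa using h2) (by simp only [Pi.neg_apply]; linarith)
        (by simp only [Pi.neg_apply]; linarith)
      refine ⟨P, Q, h, fun i j => mul_pos (q1 i) (q3 j), fun i j => ?_⟩
      have := mul_pos (q2 i) (q4 j)
      simpa [Matrix.mulVec_neg, Matrix.neg_vecMul] using this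
  obtain ⟨P, Q, h, p1, p2⟩ := hmain
  exact ⟨P, Q, h, conePos_of_rank_one hε ha0 hka hA h p1, conePos_of_rank_one hδ hb0 hkb hB h p2⟩

/-! ### Exponential growth over the free group -/

/-- The homomorphism from the free group on two letters sending `true` to `A` and `false` to
`B`. -/
def repr2 (A B : SL2) : FreeGroup Bool →* SL2 := FreeGroup.lift (fun b => if b then A else B)

/-- The square of the norm of a reduced word in `A`, `B` and their inverses grows exponentially
with the length. -/
def FreeGrowth (A B : SL2) : Prop :=
  ∃ C > (0:ℝ), ∃ κ > (1:ℝ), ∀ g : FreeGroup Bool,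
    C * κ ^ g.norm ≤ eNorm (repr2 A B g : Matrix (Fin 2) (Fin 2) ℝ) ^ 2

lemma norm_hom_le (η : FreeGroup Bool →* FreeGroup Bool)
    (hη : ∀ b, (η (FreeGroup.of b)).norm ≤ 2) (g : FreeGroup Bool) :
    (η g).norm ≤ 2 * g.norm := by
  have key : ∀ L : List (Bool × Bool), (η (FreeGroup.mk L)).norm ≤ 2 * L.length := by
    intro L
    induction L with
    | nil => rw [← FreeGroup.one_eq_mk, map_one, FreeGroup.norm_one]; simp
    | cons a L ih =>
      have e : FreeGroup.mk (a :: L) = FreeGroup.mk [a] * FreeGroup.mk L := by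
        rw [FreeGroup.mul_mk]; rfl
      have h1 : (η (FreeGroup.mk [a])).norm ≤ 2 := by
        obtain ⟨b, s⟩ := a
        cases s
        · have : FreeGroup.mk [(b, false)] = (FreeGroup.of b)⁻¹ := rfl
          rw [this, map_inv, FreeGroup.norm_inv_eq]; exact hη b
        · exact hη b
      rw [e, map_mul]
      refine (FreeGroup.norm_mul_le _ _).trans ?_
      rw [List.length_cons]
      omega
  have := key g.toWord
  rwa [FreeGroup.mk_toWord] at this

/-- Growth is inherited through an automorphism `θ` of the free group whose inverse `η` at most
doubles lengths. -/
lemma FreeGrowth.of_hom {A B A' B' : SL2} (h : FreeGrowth A' B')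
    (θ η : FreeGroup Bool →* FreeGroup Bool) (hη : ∀ b, (η (FreeGroup.of b)).norm ≤ 2)
    (hηθ : η.comp θ = MonoidHom.id _) (hθ : (repr2 A' B').comp θ = repr2 A B) :
    FreeGrowth A B := by
  obtain ⟨C, hC, κ, hκ, hg⟩ := h
  have hκ' : 1 < √κ := by rw [Real.lt_sqrt] <;> norm_num; exact hκ
  refine ⟨C, hC, √κ, hκ', fun g => ?_⟩
  have h1 := hg (θ g)
  have h2 : repr2 A' B' (θ g) = repr2 A B g := DFunLike.congr_fun hθ g
  have h3 : η (θ g) = g := DFunLike.congr_fun hηθ g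
  rw [h2] at h1
  refine le_trans ?_ h1
  refine mul_le_mul_of_nonneg_left ?_ hC.le
  calc √κ ^ g.norm ≤ √κ ^ (2 * (θ g).norm) :=
        pow_le_pow_right₀ hκ'.le (by have := norm_hom_le η hη (θ g); rwa [h3] at this)
    _ = κ ^ (θ g).norm := by rw [pow_mul, Real.sq_sqrt (by linarith)]

lemma norm_of_mul_of_le (a b : Bool) : (FreeGroup.of a * FreeGroup.of b).norm ≤ 2 :=
  (FreeGroup.norm_mul_le _ _).trans (by simp)

/-- `(A, B) ↦ (A, AB)` comes from an automorphism of the free group. -/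
lemma FreeGrowth.of_Fplus {A B : SL2} (h : FreeGrowth A (A * B)) : FreeGrowth A B := by
  refine h.of_hom
    (FreeGroup.lift fun b => if b then FreeGroup.of true
      else (FreeGroup.of true)⁻¹ * FreeGroup.of false)
    (FreeGroup.lift fun b => if b then FreeGroup.of true
      else FreeGroup.of true * FreeGroup.of false) ?_ ?_ ?_
  · intro b; cases b
    · simpa using norm_of_mul_of_le true false
    · simp
  · ext b; cases b <;> simp
  · ext b; cases b <;> simp [repr2]

lemma FreeGrowth.of_Fminus {A B : SL2} (h : FreeGrowth (B * A) B) : FreeGrowth A B := by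
  refine h.of_hom
    (FreeGroup.lift fun b => if b then (FreeGroup.of false)⁻¹ * FreeGroup.of true
      else FreeGroup.of false)
    (FreeGroup.lift fun b => if b then FreeGroup.of false * FreeGroup.of true
      else FreeGroup.of false) ?_ ?_ ?_
  · intro b; cases b
    · simp
    · simpa using norm_of_mul_of_le false true
  · ext b; cases b <;> simp
  · ext b; cases b <;> simp [repr2]

/-- Positive words are reduced, so growth over the free group bounds positive products. -/
lemma FreeGrowth.unifHyp {A B : SL2} (h : FreeGrowth A B) : UnifHypPair A B := by
  obtain ⟨C, hC, κ, hκ, hg⟩ := h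
  refine unifHyp_of_eNorm hC hκ fun w => ?_
  have hred : FreeGroup.IsReduced (w.reverse.map fun b => (b, true)) := by
    generalize w.reverse = v
    induction v with
    | nil => simp
    | cons a v ih =>
      cases v with
      | nil => simp
      | cons b v =>
        simp only [List.map_cons] at ih ⊢
        rw [FreeGroup.isReduced_cons_cons]
        exact ⟨fun _ => rfl, ih⟩
  have h1 := hg (FreeGroup.mk (w.reverse.map fun b => (b, true)))
  have h2 : (FreeGroup.mk (w.reverse.map fun b => (b, true))).norm = w.length := by
    rw [FreeGroup.norm, FreeGroup.toWord_mk, hred.reduce_eq]; simp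
  have h3 : repr2 A B (FreeGroup.mk (w.reverse.map fun b => (b, true))) = pairProd A B w := by
    rw [repr2, FreeGroup.lift_mk, pairProd, List.map_map]
    rfl
  rwa [h2, h3] at h1

/-! ### Three reflections -/

/-- Three elements `α i` of the matrix algebra satisfying the Clifford relations of the quadratic
form with Gram matrix `-f G`. -/
structure CliffordTriple (f : ℝ) (G : Fin 3 → Fin 3 → ℝ)
    (α : Fin 3 → Matrix (Fin 2) (Fin 2) ℝ) : Prop where
  pos : 0 < f
  diag : ∀ i, G i i = -2
  anti : ∀ i j, α i * α j + α j * α i = (-(f * G i j)) • 1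

/-- The linear combination of the `α i` with coefficients `c i`. -/
noncomputable def comb (α : Fin 3 → Matrix (Fin 2) (Fin 2) ℝ) (c : Fin 3 → ℝ) :
    Matrix (Fin 2) (Fin 2) ℝ := ∑ i, c i • α i

/-- The pairing `G(e_i, c)`. -/
noncomputable def gp (G : Fin 3 → Fin 3 → ℝ) (i : Fin 3) (c : Fin 3 → ℝ) : ℝ := ∑ j, G i j * c j

/-- The reflection in the `i`-th basis vector. -/
noncomputable def rfn (G : Fin 3 → Fin 3 → ℝ) (i : Fin 3) (c : Fin 3 → ℝ) : Fin 3 → ℝ :=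
  c + Pi.single i (gp G i c)

section
variable {f : ℝ} {G : Fin 3 → Fin 3 → ℝ} {α : Fin 3 → Matrix (Fin 2) (Fin 2) ℝ}

/-- The anticommutator of `α i` with a combination is the scalar `-f G(e_i, c)`. -/
lemma CliffordTriple.anti_comb (h : CliffordTriple f G α) (i : Fin 3) (c : Fin 3 → ℝ) :
    α i * comb α c + comb α c * α i = (-(f * gp G i c)) • 1 := by
  simp only [comb, gp, Finset.mul_sum, Finset.sum_mul, ← Finset.sum_add_distrib,
    Matrix.mul_smul, Matrix.smul_mul, ← smul_add, h.anti, smul_smul, ← Finset.sum_smul,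
    ← Finset.sum_neg_distrib]
  congr 1
  exact Finset.sum_congr rfl fun j _ => by ring

lemma CliffordTriple.sq (h : CliffordTriple f G α) (i : Fin 3) : α i * α i = f • 1 := by
  have := h.anti i i
  rw [h.diag, ← two_smul ℝ (α i * α i)] at this
  have e : (-(f * -2)) • (1 : Matrix (Fin 2) (Fin 2) ℝ) = (2:ℝ) • (f • 1) := by
    rw [smul_smul]; congr 1; ring
  rw [e] at this
  exact smul_right_injective _ (two_ne_zero : (2:ℝ) ≠ 0) this

lemma comb_rfn (i : Fin 3) (c : Fin 3 → ℝ) :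
    comb α (rfn G i c) = comb α c + gp G i c • α i := by
  simp only [comb, rfn, Pi.add_apply, add_smul, Finset.sum_add_distrib]
  congr 1
  rw [Finset.sum_eq_single i]
  · simp
  · intro j _ hj; simp [hj]
  · simp

/-- Conjugation by `α i` is minus the `i`-th reflection. -/
lemma CliffordTriple.conj (h : CliffordTriple f G α) (i : Fin 3) (c : Fin 3 → ℝ) :
    α i * comb α c = -(comb α (rfn G i c) * α i) := by
  rw [comb_rfn, add_mul, Matrix.smul_mul, h.sq, smul_smul, ← sub_eq_zero]
  have := h.anti_comb i c
  rw [sub_neg_eq_add, ← add_assoc, this, ← add_smul]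
  rw [show -(f * gp G i c) + gp G i c * f = 0 by ring, zero_smul]

lemma CliffordTriple.rfn_rfn (h : CliffordTriple f G α) (i : Fin 3) (c : Fin 3 → ℝ) :
    rfn G i (rfn G i c) = c := by
  have : gp G i (rfn G i c) = - gp G i c := by
    conv_lhs => rw [gp]
    simp only [rfn, Pi.add_apply, mul_add, Finset.sum_add_distrib]
    rw [Finset.sum_eq_single i (f := fun j => G i j * (Pi.single i (gp G i c) : Fin 3 → ℝ) j)]
    · rw [Pi.single_eq_same, h.diag, ← gp]; ring
    · intro j _ hj; simp [hj]
    · simp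
  rw [rfn, this, Pi.single_neg, rfn, add_neg_cancel_right]

/-- The `k`-th coordinate is at least `m` and dominates the others, which are nonnegative. -/
def Good (k : Fin 3) (c : Fin 3 → ℝ) (m : ℝ) : Prop :=
  m ≤ c k ∧ ∀ j, 0 ≤ c j ∧ c j ≤ c k

lemma Good.mono {k : Fin 3} {c : Fin 3 → ℝ} {m m' : ℝ} (h : Good k c m) (hm : m' ≤ m) :
    Good k c m' := ⟨hm.trans h.1, h.2⟩

lemma Good.pairing (hd : ∀ i, G i i = -2) {g : ℝ} (hg : 2 < g) (hG : ∀ i j, i ≠ j → g ≤ G i j)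
    {k i : Fin 3} {c : Fin 3 → ℝ} {m : ℝ} (h : Good k c m) (hik : i ≠ k) :
    g * c k - 2 * c i ≤ gp G i c := by
  have hk0 := (h.2 k).1
  have hsum : ∑ j ∈ {i, k}, G i j * c j ≤ gp G i c + 0 := by
    rw [add_zero, gp]
    have e : ∑ j, G i j * c j = ∑ j ∈ {i, k}, G i j * c j + ∑ j ∈ ({i, k} : Finset (Fin 3))ᶜ, G i j * c j :=
      (Finset.sum_add_sum_compl _ _).symm
    rw [e]
    have : 0 ≤ ∑ j ∈ ({i, k} : Finset (Fin 3))ᶜ, G i j * c j := by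
      refine Finset.sum_nonneg fun j hj => ?_
      have hj' : j ≠ i := by rintro rfl; simp at hj
      exact mul_nonneg (by linarith [hG i j hj'.symm]) (h.2 j).1
    linarith
  rw [Finset.sum_pair hik, hd] at hsum
  have := mul_le_mul_of_nonneg_right (hG i k hik) hk0
  linarith

/-- When all off-diagonal Gram entries are at least `g > 2`, reflecting in a non-dominant
coordinate makes that coordinate dominant and larger by the factor `g - 1`. -/
lemma Good.step (hd : ∀ i, G i i = -2) {g : ℝ} (hg : 2 < g) (hG : ∀ i j, i ≠ j → g ≤ G i j)
    {k i : Fin 3} {c : Fin 3 → ℝ} {m : ℝ} (h : Good k c m) (hik : i ≠ k) :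
    Good i (rfn G i c) ((g - 1) * m) := by
  have hp := h.pairing hd hg hG hik
  have hk0 := (h.2 k).1
  have hi := h.2 i
  have ei : rfn G i c i = c i + gp G i c := by simp [rfn]
  have ej : ∀ j, j ≠ i → rfn G i c j = c j := fun j hj => by simp [rfn, hj]
  have hge : (g - 1) * c k ≤ rfn G i c i := by rw [ei]; linarith
  have hck : c k ≤ (g - 1) * c k := by nlinarith
  refine ⟨(mul_le_mul_of_nonneg_left h.1 (by linarith)).trans hge, fun j => ?_⟩
  by_cases hj : j = i
  · rw [hj]; exact ⟨by linarith, le_rfl⟩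
  · rw [ej j hj]; exact ⟨(h.2 j).1, by linarith [(h.2 j).2]⟩

end

/-! ### The reflections attached to a pair in `Hid` -/

section
open Matrix
variable (M N : Matrix (Fin 2) (Fin 2) ℝ)

/-- The commutator `[M, N]` of the matrix algebra; it has trace zero and conjugates `M` and `N`
to their adjugates. -/
noncomputable def cm : Matrix (Fin 2) (Fin 2) ℝ := M * N - N * M

lemma cm_sq : cm M N * cm M N = (-(cm M N).det) • 1 := by
  ext i j; fin_cases i <;> fin_cases j <;>
    simp [cm, Matrix.mul_apply, Fin.sum_univ_two, Matrix.det_fin_two] <;> ring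

lemma cm_left : M * cm M N * cm M N + cm M N * (M * cm M N) = (-(cm M N).det * M.trace) • 1 := by
  ext i j; fin_cases i <;> fin_cases j <;>
    simp [cm, Matrix.mul_apply, Fin.sum_univ_two, Matrix.det_fin_two, Matrix.trace_fin_two] <;> ring

lemma cm_right : cm M N * (cm M N * N) + cm M N * N * cm M N = (-(cm M N).det * N.trace) • 1 := by
  ext i j; fin_cases i <;> fin_cases j <;>
    simp [cm, Matrix.mul_apply, Fin.sum_univ_two, Matrix.det_fin_two, Matrix.trace_fin_two] <;> ring

lemma cm_left_sq : M * cm M N * (M * cm M N) = (-(cm M N).det * M.det) • 1 := by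
  ext i j; fin_cases i <;> fin_cases j <;>
    simp [cm, Matrix.mul_apply, Fin.sum_univ_two, Matrix.det_fin_two] <;> ring

lemma cm_right_sq : cm M N * N * (cm M N * N) = (-(cm M N).det * N.det) • 1 := by
  ext i j; fin_cases i <;> fin_cases j <;>
    simp [cm, Matrix.mul_apply, Fin.sum_univ_two, Matrix.det_fin_two] <;> ring

lemma cm_both : M * cm M N * (cm M N * N) + cm M N * N * (M * cm M N) =
    (-(cm M N).det * (M * N).trace) • 1 := by
  ext i j; fin_cases i <;> fin_cases j <;>
    simp [cm, Matrix.mul_apply, Fin.sum_univ_two, Matrix.det_fin_two, Matrix.trace_fin_two] <;> ring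

/-- Fricke's formula. -/
lemma cm_det : -(cm M N).det = M.trace ^ 2 * N.det + N.trace ^ 2 * M.det + (M * N).trace ^ 2
    - M.trace * N.trace * (M * N).trace - 4 * M.det * N.det := by
  simp [cm, Matrix.mul_apply, Fin.sum_univ_two, Matrix.det_fin_two, Matrix.trace_fin_two]; ring

end

lemma exists_sign (x : ℝ) : ∃ ε : ℝ, ε * ε = 1 ∧ |x| = -(ε * x) := by
  rcases le_total 0 x with h | h
  · exact ⟨-1, by norm_num, by rw [abs_of_nonneg h]; ring⟩
  · exact ⟨1, by norm_num, by rw [abs_of_nonpos h]; ring⟩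

/-- A pair in `Hid` yields a Clifford triple in which all off-diagonal entries of the Gram matrix
exceed `2`, and such that `A` and `B` are, up to a scalar, the products of consecutive members. -/
lemma exists_triple {A B : SL2} (h : (A, B) ∈ Hid) :
    ∃ f G α, CliffordTriple f G α ∧ (∃ g > (2:ℝ), ∀ i j, i ≠ j → g ≤ G i j) ∧
      (∃ s : ℝ, s ≠ 0 ∧ α 0 * α 1 = s • (A : Matrix (Fin 2) (Fin 2) ℝ)) ∧
      (∃ s : ℝ, s ≠ 0 ∧ α 1 * α 2 = s • (B : Matrix (Fin 2) (Fin 2) ℝ)) := by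
  obtain ⟨hx, hy, hz, hn⟩ := h
  simp only [trace2, Matrix.SpecialLinearGroup.coe_mul] at hx hy hz hn
  have dA : (A : Matrix (Fin 2) (Fin 2) ℝ).det = 1 := A.det_coe
  have dB : (B : Matrix (Fin 2) (Fin 2) ℝ).det = 1 := B.det_coe
  generalize (A : Matrix (Fin 2) (Fin 2) ℝ) = M at *
  generalize (B : Matrix (Fin 2) (Fin 2) ℝ) = N at *
  have h1 := cm_sq M N
  have h2 := cm_left M N
  have h3 := cm_right M N
  have h4 := cm_left_sq M N
  have h5 := cm_right_sq M N
  have h6 := cm_both M N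
  have h7 := cm_det M N
  rw [dA] at h4 h7
  rw [dB] at h5 h7
  generalize -(cm M N).det = f at *
  generalize cm M N = S at *
  generalize M.trace = x at *
  generalize N.trace = y at *
  generalize (M * N).trace = z at *
  have hf : 0 < f := by
    have hx2 : 4 < x ^ 2 := by rw [← sq_abs]; nlinarith
    nlinarith [sq_nonneg y, sq_nonneg z]
  obtain ⟨ε, hε, ex⟩ := exists_sign x
  obtain ⟨δ, hδ, ey⟩ := exists_sign y
  have hε' : ε ≠ 0 := by rintro rfl; norm_num at hε
  have hδ' : δ ≠ 0 := by rintro rfl; norm_num at hδ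
  have ez : |z| = -(ε * δ * z) := by
    have hpos : 0 < |x| * |y| := by positivity
    have : 0 < -(ε * δ * z) := by
      have : |x| * |y| * (ε * δ * z) < 0 := by
        rw [ex, ey]
        have : -(ε * x) * -(δ * y) * (ε * δ * z) = (ε * ε) * (δ * δ) * (x * y * z) := by ring
        rw [this, hε, hδ]; linarith
      by_contra hc
      nlinarith
    rw [← abs_of_pos this, abs_neg, abs_mul, abs_mul]
    have e1 : |ε| = 1 := by
      rw [← sq_eq_sq₀ (abs_nonneg _) zero_le_one, sq_abs, sq, hε, one_pow]
    have e2 : |δ| = 1 := by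
      rw [← sq_eq_sq₀ (abs_nonneg _) zero_le_one, sq_abs, sq, hδ, one_pow]
    rw [e1, e2]; ring
  refine ⟨f, ![![-2, |x|, |z|], ![|x|, -2, |y|], ![|z|, |y|, -2]],
    ![ε • (M * S), S, δ • (S * N)], ⟨hf, fun i => by fin_cases i <;> rfl, fun i j => ?_⟩,
    ⟨min |x| (min |y| |z|), lt_min hx (lt_min hy hz), fun i j hij => ?_⟩,
    ⟨ε * f, mul_ne_zero hε' hf.ne', ?_⟩, ⟨δ * f, mul_ne_zero hδ' hf.ne', ?_⟩⟩
  · have h2' : S * (M * S) + M * S * S = (f * x) • 1 := by rw [add_comm]; exact h2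
    have h3' : S * N * S + S * (S * N) = (f * y) • 1 := by rw [add_comm]; exact h3
    have h6' : S * N * (M * S) + M * S * (S * N) = (f * z) • 1 := by rw [add_comm]; exact h6
    fin_cases i <;> fin_cases j <;>
      simp only [Fin.zero_eta, Fin.mk_one, Fin.reduceFinMk, Matrix.cons_val_zero,
        Matrix.cons_val_one, Matrix.cons_val, Matrix.smul_mul, Matrix.mul_smul, smul_smul]
    · rw [h4, smul_smul, ← add_smul]; congr 1; linear_combination 2 * f * hε
    · rw [← smul_add, h2, smul_smul]; congr 1; rw [ex]; ring
    · rw [mul_comm δ ε, ← smul_add, h6, smul_smul]; congr 1; rw [ez]; ring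
    · rw [← smul_add, h2', smul_smul]; congr 1; rw [ex]; ring
    · rw [h1, ← add_smul]; congr 1; ring
    · rw [← smul_add, h3, smul_smul]; congr 1; rw [ey]; ring
    · rw [mul_comm δ ε, ← smul_add, h6', smul_smul]; congr 1; rw [ez]; ring
    · rw [← smul_add, h3', smul_smul]; congr 1; rw [ey]; ring
    · rw [h5, smul_smul, ← add_smul]; congr 1; linear_combination 2 * f * hδ
  · fin_cases i <;> fin_cases j <;> simp at hij ⊢
  · simp only [Matrix.cons_val_zero, Matrix.cons_val_one, Matrix.smul_mul]
    rw [mul_assoc, h1, Matrix.mul_smul, mul_one, smul_smul]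
  · simp only [Matrix.cons_val_one, Matrix.cons_val, Matrix.mul_smul]
    rw [← mul_assoc, h1, Matrix.smul_mul, one_mul, smul_smul]

/-! ### Words in the free group and the reflections -/

section
open Matrix
variable {f : ℝ} {G : Fin 3 → Fin 3 → ℝ} {α : Fin 3 → Matrix (Fin 2) (Fin 2) ℝ}

/-- Up to a scalar, conjugation by `α i * α j` acts on the span of the `α`'s as the product of two
reflections. -/
lemma CliffordTriple.conj_prod (h : CliffordTriple f G α) {i j : Fin 3} {s : ℝ} (hs : s ≠ 0)
    {M : Matrix (Fin 2) (Fin 2) ℝ} (e : α i * α j = s • M) (c : Fin 3 → ℝ) :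
    M * comb α c = comb α (rfn G i (rfn G j c)) * M := by
  have : s • (M * comb α c) = s • (comb α (rfn G i (rfn G j c)) * M) := by
    rw [← Matrix.smul_mul, ← Matrix.mul_smul, ← e, mul_assoc, h.conj, mul_neg, ← mul_assoc,
      h.conj, neg_mul, neg_neg, mul_assoc]
  exact smul_right_injective _ hs this

lemma CliffordTriple.conj_prod_inv (h : CliffordTriple f G α) {i j : Fin 3} {s : ℝ} (hs : s ≠ 0)
    {M : SL2} (e : α i * α j = s • (M : Matrix (Fin 2) (Fin 2) ℝ)) (c : Fin 3 → ℝ) :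
    ((M⁻¹ : SL2) : Matrix (Fin 2) (Fin 2) ℝ) * comb α c =
      comb α (rfn G j (rfn G i c)) * ((M⁻¹ : SL2) : Matrix (Fin 2) (Fin 2) ℝ) := by
  have key := h.conj_prod hs e (rfn G j (rfn G i c))
  rw [h.rfn_rfn, h.rfn_rfn] at key
  have e1 : ((M⁻¹ : SL2) : Matrix (Fin 2) (Fin 2) ℝ) * (M : Matrix (Fin 2) (Fin 2) ℝ) = 1 := by
    rw [← Matrix.SpecialLinearGroup.coe_mul, inv_mul_cancel, Matrix.SpecialLinearGroup.coe_one]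
  have e2 : (M : Matrix (Fin 2) (Fin 2) ℝ) * ((M⁻¹ : SL2) : Matrix (Fin 2) (Fin 2) ℝ) = 1 := by
    rw [← Matrix.SpecialLinearGroup.coe_mul, mul_inv_cancel, Matrix.SpecialLinearGroup.coe_one]
  calc _ = ((M⁻¹ : SL2) : Matrix (Fin 2) (Fin 2) ℝ) * (comb α c * (M : Matrix (Fin 2) (Fin 2) ℝ))
        * ((M⁻¹ : SL2) : Matrix (Fin 2) (Fin 2) ℝ) := by
          rw [mul_assoc, mul_assoc, e2, mul_one]
    _ = _ := by rw [← key, ← mul_assoc, e1, one_mul]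

/-- The action on coefficient vectors of the letter `a` of the free group. -/
noncomputable def act (G : Fin 3 → Fin 3 → ℝ) (a : Bool × Bool) (c : Fin 3 → ℝ) : Fin 3 → ℝ :=
  match a with
  | (true, true) => rfn G 0 (rfn G 1 c)
  | (true, false) => rfn G 1 (rfn G 0 c)
  | (false, true) => rfn G 1 (rfn G 2 c)
  | (false, false) => rfn G 2 (rfn G 1 c)

/-- Position of the coefficient vector of a reduced word with leftmost letter `a`: after the
possible cancellation of a leftmost reflection `1`, the last reflection applied dominates. -/
def State (G : Fin 3 → Fin 3 → ℝ) (a : Bool × Bool) (c : Fin 3 → ℝ) (m : ℝ) : Prop :=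
  match a with
  | (true, true) => Good 0 c m
  | (true, false) => Good 0 (rfn G 1 c) m
  | (false, true) => Good 2 (rfn G 1 c) m
  | (false, false) => Good 2 c m

lemma Good.step2 (hd : ∀ i, G i i = -2) {g : ℝ} (hg : 2 < g) (hG : ∀ i j, i ≠ j → g ≤ G i j)
    {k i j : Fin 3} {c : Fin 3 → ℝ} {m : ℝ} (h : Good k c m) (hm : 0 ≤ m) (hik : i ≠ k)
    (hji : j ≠ i) : Good j (rfn G j (rfn G i c)) ((g - 1) * m) :=
  ((h.step hd hg hG hik).step hd hg hG hji).mono (by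
    have : 0 ≤ (g - 1) * m := mul_nonneg (by linarith) hm
    nlinarith)

/-- Every letter that does not cancel multiplies the dominant coefficient by at least `g - 1`. -/
lemma State.step (h : CliffordTriple f G α) {g : ℝ} (hg : 2 < g)
    (hG : ∀ i j, i ≠ j → g ≤ G i j) {a a' : Bool × Bool} {c : Fin 3 → ℝ} {m : ℝ} (hm : 0 ≤ m)
    (hs : State G a' c m) (ha : a.1 = a'.1 → a.2 = a'.2) :
    State G a (act G a c) ((g - 1) * m) := by
  obtain ⟨b, s⟩ := a
  obtain ⟨b', s'⟩ := a'
  -- a dominant reflected vector `rfn G 1 c` gives a dominant `c` with index `1`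
  have flip : ∀ k : Fin 3, 1 ≠ k → Good k (rfn G 1 c) m → Good 1 c m := fun k hk hgd => by
    have := hgd.step h.diag hg hG hk
    rw [h.rfn_rfn] at this
    exact this.mono (by nlinarith)
  cases b <;> cases s <;> cases b' <;> cases s' <;> simp only [State, act, h.rfn_rfn] at hs ⊢ <;>
    first
    | exact absurd (ha rfl) (by decide)
    | exact hs.step h.diag hg hG (by decide)
    | exact hs.step2 h.diag hg hG hm (by decide) (by decide)
    | exact (flip _ (by decide) hs).step h.diag hg hG (by decide)

lemma State.init (h : CliffordTriple f G α) {g : ℝ} (hg : 2 < g)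
    (hG : ∀ i j, i ≠ j → g ≤ G i j) (a : Bool × Bool) :
    State G a (act G a 1) (g - 1) := by
  have h0 : ∀ k, Good k (1 : Fin 3 → ℝ) 1 := fun k => ⟨le_rfl, fun j => by simp⟩
  rw [← mul_one (g - 1)]
  obtain ⟨b, s⟩ := a
  cases b <;> cases s <;> simp only [State, act, h.rfn_rfn]
  · exact (h0 0).step2 h.diag hg hG zero_le_one (by decide) (by decide)
  · exact (h0 0).step h.diag hg hG (by decide)
  · exact (h0 2).step h.diag hg hG (by decide)
  · exact (h0 2).step2 h.diag hg hG zero_le_one (by decide) (by decide)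

/-- Coefficient vector obtained from `(1, 1, 1)` by the action of a word. -/
noncomputable def orb (G : Fin 3 → Fin 3 → ℝ) (L : List (Bool × Bool)) : Fin 3 → ℝ :=
  L.foldr (act G) 1

lemma state_orb (h : CliffordTriple f G α) {g : ℝ} (hg : 2 < g)
    (hG : ∀ i j, i ≠ j → g ≤ G i j) (a : Bool × Bool) (L : List (Bool × Bool))
    (hL : FreeGroup.IsReduced (a :: L)) :
    State G a (orb G (a :: L)) ((g - 1) ^ (L.length + 1)) := by
  induction L generalizing a with
  | nil => simpa [orb] using State.init h hg hG a
  | cons a' L ih =>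
    rw [FreeGroup.isReduced_cons_cons] at hL
    have := (ih a' hL.2).step h hg hG (by have : 0 < g - 1 := by linarith
                                          positivity) hL.1
    rw [List.length_cons, pow_succ' _ (L.length + 1)]
    exact this

lemma good_orb (h : CliffordTriple f G α) {g : ℝ} (hg : 2 < g)
    (hG : ∀ i j, i ≠ j → g ≤ G i j) (L : List (Bool × Bool)) (hL : FreeGroup.IsReduced L) :
    ∃ k, Good k (orb G L) ((g - 1) ^ L.length) := by
  cases L with
  | nil => exact ⟨0, by simp [orb], fun j => by simp [orb]⟩
  | cons a L =>
    have hs := state_orb h hg hG a L hL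
    rw [List.length_cons]
    have hm : 0 < (g - 1) ^ (L.length + 1) := by
      have : 0 < g - 1 := by linarith
      positivity
    generalize orb G (a :: L) = c at *
    have flip : ∀ k : Fin 3, 1 ≠ k → Good k (rfn G 1 c) ((g - 1) ^ (L.length + 1)) →
        Good 1 c ((g - 1) ^ (L.length + 1)) := fun k hk hgd => by
      have := hgd.step h.diag hg hG hk
      rw [h.rfn_rfn] at this
      exact this.mono (by nlinarith)
    obtain ⟨b, s⟩ := a
    cases b <;> cases s <;> simp only [State] at hs
    exacts [⟨_, hs⟩, ⟨1, flip _ (by decide) hs⟩, ⟨1, flip _ (by decide) hs⟩, ⟨_, hs⟩]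

lemma repr2_conj (h : CliffordTriple f G α) {A B : SL2}
    (hA : ∃ s : ℝ, s ≠ 0 ∧ α 0 * α 1 = s • (A : Matrix (Fin 2) (Fin 2) ℝ))
    (hB : ∃ s : ℝ, s ≠ 0 ∧ α 1 * α 2 = s • (B : Matrix (Fin 2) (Fin 2) ℝ))
    (L : List (Bool × Bool)) :
    (repr2 A B (FreeGroup.mk L) : Matrix (Fin 2) (Fin 2) ℝ) * comb α 1 =
      comb α (orb G L) * (repr2 A B (FreeGroup.mk L) : Matrix (Fin 2) (Fin 2) ℝ) := by
  obtain ⟨s, hs, eA⟩ := hA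
  obtain ⟨t, ht, eB⟩ := hB
  induction L with
  | nil => rw [← FreeGroup.one_eq_mk, map_one]; simp [orb]
  | cons a L ih =>
    have e : FreeGroup.mk (a :: L) = FreeGroup.mk [a] * FreeGroup.mk L := by
      rw [FreeGroup.mul_mk]; rfl
    have key : ∀ c, (repr2 A B (FreeGroup.mk [a]) : Matrix (Fin 2) (Fin 2) ℝ) * comb α c =
        comb α (act G a c) * (repr2 A B (FreeGroup.mk [a]) : Matrix (Fin 2) (Fin 2) ℝ) := by
      intro c
      obtain ⟨b, u⟩ := a
      cases b <;> cases u <;> simp only [repr2, FreeGroup.lift_mk, List.map_cons, List.map_nil,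
        List.prod_singleton, cond_true, cond_false, if_true, if_false, Bool.false_eq_true, act]
      · exact h.conj_prod_inv ht eB c
      · exact h.conj_prod ht eB c
      · exact h.conj_prod_inv hs eA c
      · exact h.conj_prod hs eA c
    rw [e, map_mul, Matrix.SpecialLinearGroup.coe_mul, mul_assoc, ih, ← mul_assoc, key, mul_assoc]
    rfl

/-- A dominated coefficient vector has large norm: pair it with some `α j`, `j ≠ k`. -/
lemma eNorm_comb_ge (h : CliffordTriple f G α) {g : ℝ} (hg : 2 < g)
    (hG : ∀ i j, i ≠ j → g ≤ G i j) {k : Fin 3} {c : Fin 3 → ℝ} {m : ℝ} (hc : Good k c m) :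
    f * (g - 2) * m ≤ 2 * (∑ i, eNorm (α i)) * eNorm (comb α c) := by
  obtain ⟨j, hj⟩ : ∃ j : Fin 3, j ≠ k := exists_ne k
  have hp := hc.pairing h.diag hg hG hj
  have h1 : (g - 2) * m ≤ gp G j c := by
    have := (hc.2 j).2
    nlinarith [hc.1]
  have h2 : f * gp G j c ≤ 2 * (eNorm (α j) * eNorm (comb α c)) := by
    have e := congrArg eNorm (h.anti_comb j c)
    have l1 := eNorm_add_le (α j * comb α c) (comb α c * α j)
    have l2 := eNorm_mul_le (α j) (comb α c)
    have l3 := eNorm_mul_le (comb α c) (α j)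
    have l4 : |-(f * gp G j c)| ≤ eNorm ((-(f * gp G j c)) • (1 : Matrix (Fin 2) (Fin 2) ℝ)) :=
      abs_le_eNorm_smul_one _
    rw [← e] at l4
    have l5 := neg_abs_le (-(f * gp G j c))
    linarith [mul_comm (eNorm (comb α c)) (eNorm (α j))]
  have h3 : eNorm (α j) ≤ ∑ i, eNorm (α i) :=
    Finset.single_le_sum (f := fun i => eNorm (α i)) (fun i _ => eNorm_nonneg _)
      (Finset.mem_univ j)
  have h4 := mul_le_mul_of_nonneg_right h3 (eNorm_nonneg (comb α c))
  have h5 := mul_le_mul_of_nonneg_left h1 h.pos.le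
  linarith

/-- Conjugation by a long reduced word takes the fixed element `comb α 1` to one with exponentially
large coefficients, which forces the word itself to have large norm. -/
lemma freeGrowth_of_Hid {A B : SL2} (hAB : (A, B) ∈ Hid) : FreeGrowth A B := by
  obtain ⟨f, G, α, h, ⟨g, hg, hG⟩, hA, hB⟩ := exists_triple hAB
  set Λ := 2 * (∑ i, eNorm (α i)) with hΛ
  set D := Λ * eNorm (comb α 1) + 1 with hD
  have hΛ0 : 0 ≤ Λ := mul_nonneg zero_le_two (Finset.sum_nonneg fun i _ => eNorm_nonneg _)
  have hD0 : 0 < D := by have := mul_nonneg hΛ0 (eNorm_nonneg (comb α 1)); linarith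
  have hfg : 0 < f * (g - 2) := mul_pos h.pos (by linarith)
  refine ⟨f * (g - 2) / D, div_pos hfg hD0, g - 1, by linarith, fun w => ?_⟩
  obtain ⟨k, hk⟩ := good_orb h hg hG w.toWord FreeGroup.isReduced_toWord
  have h1 := eNorm_comb_ge h hg hG hk
  have h2 := repr2_conj h hA hB w.toWord
  rw [FreeGroup.mk_toWord] at h2
  set M := repr2 A B w
  have h3 : comb α (orb G w.toWord) =
      (M : Matrix (Fin 2) (Fin 2) ℝ) * comb α 1 * ((M⁻¹ : SL2) : Matrix (Fin 2) (Fin 2) ℝ) := by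
    rw [h2, mul_assoc, ← Matrix.SpecialLinearGroup.coe_mul, mul_inv_cancel,
      Matrix.SpecialLinearGroup.coe_one, mul_one]
  have h4 : eNorm (comb α (orb G w.toWord)) ≤
      eNorm (M : Matrix (Fin 2) (Fin 2) ℝ) * eNorm (comb α 1) *
        eNorm (M : Matrix (Fin 2) (Fin 2) ℝ) := by
    rw [h3]
    refine (eNorm_mul_le _ _).trans ?_
    rw [eNorm_inv]
    exact mul_le_mul_of_nonneg_right (eNorm_mul_le _ _) (eNorm_nonneg _)
  rw [div_mul_eq_mul_div, div_le_iff₀ hD0]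
  have h5 := mul_le_mul_of_nonneg_left h4 hΛ0
  have h6 : (g - 1) ^ w.norm = (g - 1) ^ w.toWord.length := rfl
  rw [h6]
  nlinarith [sq_nonneg (eNorm (M : Matrix (Fin 2) (Fin 2) ℝ))]

end

lemma unifHyp_of_applySeq (s : List Bool) (A B : SL2) (h : applySeq s (A, B) ∈ Hid) :
    UnifHypPair A B := by
  refine FreeGrowth.unifHyp ?_
  induction s generalizing A B with
  | nil => exact freeGrowth_of_Hid h
  | cons b s ih =>
    cases b
    · exact FreeGrowth.of_Fminus (ih _ _ h)
    · exact FreeGrowth.of_Fplus (ih _ _ h)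

theorem components_full_two_shift (A B : SL2) :
    (UnifHypPair A B ↔
      ((A, B) ∈ H0 ∨ ∃ s : List Bool, applySeq s (A, B) ∈ Hid)) ∧
    ¬(((A, B) ∈ H0) ∧ ∃ s : List Bool, applySeq s (A, B) ∈ Hid) ∧
    (∀ s t : List Bool, applySeq s (A, B) ∈ Hid → applySeq t (A, B) ∈ Hid →
      s = t) := by
  refine ⟨⟨fun hU => ?_, ?_⟩, ?_, fun s t hs ht => ?_⟩
  · obtain ⟨C, hC, l, hl, hw⟩ := id hU
    have hx : 2 < |trace2 A| := by simpa [pairProd] using two_lt_trace hC hl hw [true] (by simp)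
    have hy : 2 < |trace2 B| := by simpa [pairProd] using two_lt_trace hC hl hw [false] (by simp)
    have hz : 2 < |trace2 (A * B)| := by
      simpa [pairProd] using two_lt_trace hC hl hw [false, true] (by simp)
    have hne : trace2 A * trace2 B * trace2 (A * B) ≠ 0 := by
      rw [← abs_ne_zero, abs_mul, abs_mul]; positivity
    rcases lt_or_gt_of_ne hne with hn | hp
    · exact Or.inr ⟨[], hx, hy, hz, hn⟩
    · by_cases hwl : trT (A, B) ∈ WeakLinkTr
      · exact Or.inr (exists_Hid_of_weakLink hU hwl)
      · exact Or.inl (H0_of_posPair (posPair_of_not_weakLink hx hy hp hz hwl))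
  · rintro (h | ⟨s, hs⟩)
    · exact unifHyp_of_posPair (posPair_of_H0 h)
    · exact unifHyp_of_applySeq s A B hs
  · rintro ⟨h, s, hs⟩
    exact not_Hid_of_posPair (posPair_of_H0 (H0_invariant h s)) hs
  · exact seqT_unique s t ((mem_Hid_iff s _).1 hs) ((mem_Hid_iff t _).1 ht)
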